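/- Every quasidisk satisfies the quasihyperbolic boundary condition: if f is a quasiconformal mapping of ℂ onto itself and D = f(𝔻) is the image of the unit disc, then D satisfies the quasihyperbolic boundary condition. -/

import Mathlib

open Complex Metric MeasureTheory Filter Topology Set
open scoped ENNReal NNReal

noncomputable section

/-- The supremum of products of mutual distances of `n`-tuples of points of `E`
(the quantity `V_n` in the definition of the transfinite diameter). -/
noncomputable def diamProd (E : Set ℂ) (n : ℕ) : ℝ≥0∞ :=
  ⨆ (z : Fin n → ℂ) (_ : ∀ i, z i ∈ E),
    ∏ p ∈ Finset.univ.filter (fun p : Fin n × Fin n => p.1 < p.2), edist (z p.1) (z p.2)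

/-- The logarithmic capacity of a (bounded) set, defined as its transfinite diameter
`lim_n V_n^{2/(n(n-1))}` (realized via `limsup`). -/
noncomputable def logCap (E : Set ℂ) : ℝ≥0∞ :=
  Filter.limsup (fun n : ℕ => diamProd E n ^ ((2 : ℝ) / ((n : ℝ) * ((n : ℝ) - 1))))
    Filter.atTop

/-- A set is measurable with respect to logarithmic capacity if its inner capacity
(sup of capacities of compact subsets) equals its outer capacity
(inf of capacities of open supersets). -/
def CapMeasurableSet (E : Set ℂ) : Prop :=
  (⨆ (F : Set ℂ) (_ : IsCompact F) (_ : F ⊆ E), logCap F) =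
    (⨅ (U : Set ℂ) (_ : IsOpen U) (_ : E ⊆ U), logCap U)

/-- A function defined on `E ⊆ ℂ` is measurable with respect to logarithmic capacity if
preimages of open sets are measurable with respect to logarithmic capacity. -/
def CapMeasFunOn {X : Type*} [TopologicalSpace X] (E : Set ℂ) (f : ℂ → X) : Prop :=
  ∀ O : Set X, IsOpen O → CapMeasurableSet {z | z ∈ E ∧ f z ∈ O}

/-- `P` holds quasi-everywhere on `E`: the exceptional set has logarithmic capacity zero. -/
def QEOn (E : Set ℂ) (P : ℂ → Prop) : Prop :=
  logCap {z | z ∈ E ∧ ¬ P z} = 0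

/-- The unit circle `∂𝔻`. -/
def unitCircle : Set ℂ := Metric.sphere 0 1

/-- Variation of `f` along the parametrized arc `p` over parameters in `I`. -/
noncomputable def varAlong {E : Type*} [SeminormedAddCommGroup E]
    (f : ℂ → E) (p : ℝ → ℂ) (I : Set ℝ) : ℝ≥0∞ :=
  ⨆ (k : ℕ) (t : Fin (k + 1) → ℝ) (_ : Monotone t) (_ : ∀ i, t i ∈ I),
    ∑ i : Fin k, (‖f (p (t i.succ)) - f (p (t i.castSucc))‖₊ : ℝ≥0∞)

/-- Cyclic variation of `f` on the unit circle: the supremum of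
`∑ⱼ ‖f(ζ_{j+1}) - f(ζ_j)‖` over all finite collections of points of `∂𝔻` in cyclic order
(realized by monotone angle parameters running over at most one full turn). -/
noncomputable def circleVar {E : Type*} [SeminormedAddCommGroup E] (f : ℂ → E) : ℝ≥0∞ :=
  ⨆ (k : ℕ) (t : Fin (k + 1) → ℝ) (_ : Monotone t)
    (_ : t (Fin.last k) ≤ t 0 + 2 * Real.pi),
    ∑ i : Fin k, (‖f (circleMap 0 1 (t i.succ)) - f (circleMap 0 1 (t i.castSucc))‖₊ : ℝ≥0∞)

/-- `A` is a subarc of the curve `Γ` on which `f` has bounded variation. -/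
def IsBVArcOn {E : Type*} [SeminormedAddCommGroup E] (f : ℂ → E) (Γ A : Set ℂ) : Prop :=
  A ⊆ Γ ∧ ∃ (p : ℝ → ℂ) (I : Set ℝ), I.OrdConnected ∧ ContinuousOn p I ∧
    Set.InjOn p I ∧ p '' I = A ∧ varAlong f p I < ⊤

/-- `f` is of countable bounded variation on the curve `Γ`: there are countably many
mutually disjoint arcs of `Γ` on each of which `f` has bounded variation, whose complement
in `Γ` has logarithmic capacity zero. -/
def CBVOn {E : Type*} [SeminormedAddCommGroup E] (f : ℂ → E) (Γ : Set ℂ) : Prop :=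
  ∃ γ : ℕ → Set ℂ, (Pairwise fun m n => Disjoint (γ m) (γ n)) ∧
    (∀ n, IsBVArcOn f Γ (γ n)) ∧ logCap (Γ \ ⋃ n, γ n) = 0

/-- The open sector (angle) with vertex `ζ`, direction `e` and half-opening `a`. -/
def Sector (ζ e : ℂ) (a : ℝ) : Set ℂ :=
  {z | z ≠ ζ ∧ |Complex.arg ((z - ζ) / e)| < a}

/-- `f` has angular (nontangential) limit `L` at the boundary point `ζ` of `D`:
along every angle with vertex `ζ` lying in `D` near `ζ`, `f` tends to `L`. -/
def AngularLimit {X : Type*} [TopologicalSpace X] (f : ℂ → X) (D : Set ℂ) (ζ : ℂ)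
    (L : X) : Prop :=
  ∀ (e : ℂ) (a r : ℝ), e ≠ 0 → 0 < a → a < Real.pi / 2 → 0 < r →
    Sector ζ e a ∩ Metric.ball ζ r ⊆ D →
    Filter.Tendsto f (𝓝[Sector ζ e a ∩ Metric.ball ζ r] ζ) (𝓝 L)

/-- `u` is harmonic on `D`. -/
def IsHarmonicOn (u : ℂ → ℝ) (D : Set ℂ) : Prop :=
  ContDiffOn ℝ 2 u D ∧ ∀ z ∈ D,
    fderiv ℝ (fun w => fderiv ℝ u w 1) z 1
      + fderiv ℝ (fun w => fderiv ℝ u w Complex.I) z Complex.I = 0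

/-- The curve `Γ` has tangent line at `ζ` in the direction `e`. -/
def HasTangentVia (Γ : Set ℂ) (ζ e : ℂ) : Prop :=
  e ≠ 0 ∧ Filter.Tendsto
    (fun z => Metric.infDist z {w : ℂ | ∃ t : ℝ, w = ζ + t • e} / ‖z - ζ‖)
    (𝓝[Γ \ {ζ}] ζ) (𝓝 0)

/-- The curve `Γ` has a tangent at `ζ`. -/
def HasTangentAt (Γ : Set ℂ) (ζ : ℂ) : Prop := ∃ e : ℂ, HasTangentVia Γ ζ e

/-- `D` is a Jordan domain: a bounded domain whose boundary is a Jordan curve. -/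
def IsJordanDomain (D : Set ℂ) : Prop :=
  IsOpen D ∧ IsConnected D ∧ Bornology.IsBounded D ∧
    Nonempty ((Metric.sphere (0 : ℂ) 1) ≃ₜ (frontier D))

/-- The quasihyperbolic distance in `D`: the infimum of `∫ ds / d(ζ, ∂D)` over
(rectifiable, here Lipschitz-parametrized) curves joining `z` and `w` in `D`. -/
noncomputable def qhDist (D : Set ℂ) (z w : ℂ) : ℝ :=
  sInf {L : ℝ | ∃ γ : ℝ → ℂ, (∃ K : ℝ≥0, LipschitzOnWith K γ (Set.Icc 0 1)) ∧
    (∀ t ∈ Set.Icc (0 : ℝ) 1, γ t ∈ D) ∧ γ 0 = z ∧ γ 1 = w ∧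
    L = ∫ t in (0 : ℝ)..1, ‖deriv γ t‖ / Metric.infDist (γ t) (frontier D)}

/-- `D` satisfies the quasihyperbolic boundary condition. -/
def QHBC (D : Set ℂ) : Prop :=
  ∃ (a b : ℝ) (z₀ : ℂ), z₀ ∈ D ∧ ∀ z ∈ D,
    qhDist D z z₀ ≤
      a * Real.log (Metric.infDist z₀ (frontier D) / Metric.infDist z (frontier D)) + b

/-- `D` satisfies the (A)-condition of Ladyzhenskaya–Ural'tseva. -/
def ACondition (D : Set ℂ) : Prop :=
  ∃ Θ₀ ∈ Set.Ioo (0 : ℝ) 1, ∃ ρ₀ ∈ Set.Ioo (0 : ℝ) 1,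
    ∀ ζ ∈ frontier D, ∀ ρ : ℝ, 0 < ρ → ρ ≤ ρ₀ →
      volume (D ∩ Metric.ball ζ ρ) ≤ ENNReal.ofReal Θ₀ * volume (Metric.ball ζ ρ)

/-- `g₁, g₂` are the first generalized (weak) partial derivatives of `f` on `D`. -/
def HasWeakPartialsOn (f g₁ g₂ : ℂ → ℂ) (D : Set ℂ) : Prop :=
  MeasureTheory.LocallyIntegrableOn f D volume ∧
  MeasureTheory.LocallyIntegrableOn g₁ D volume ∧
  MeasureTheory.LocallyIntegrableOn g₂ D volume ∧
  ∀ φ : ℂ → ℝ, ContDiff ℝ (⊤ : ℕ∞) φ → HasCompactSupport φ → tsupport φ ⊆ D →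
    (∫ z in D, f z * (fderiv ℝ φ z 1 : ℂ)) = -(∫ z in D, g₁ z * (φ z : ℂ)) ∧
    (∫ z in D, f z * (fderiv ℝ φ z Complex.I : ℂ)) = -(∫ z in D, g₂ z * (φ z : ℂ))

/-- `f` is a regular solution of the Beltrami equation `f_z̄ = μ f_z` on `D`:
continuous, discrete, open, with first generalized derivatives satisfying the
equation almost everywhere. -/
def IsRegularBeltramiSolution (μ : ℂ → ℂ) (f : ℂ → ℂ) (D : Set ℂ) : Prop :=
  ContinuousOn f D ∧
  (∀ w : ℂ, ∀ z ∈ D, f z = w → 𝓝[(D ∩ f ⁻¹' {w}) \ {z}] z = ⊥) ∧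
  (∀ U : Set ℂ, U ⊆ D → IsOpen U → IsOpen (f '' U)) ∧
  ∃ g₁ g₂ : ℂ → ℂ, HasWeakPartialsOn f g₁ g₂ D ∧
    ∀ᵐ z ∂(volume.restrict D),
      (g₁ z + Complex.I * g₂ z) / 2 = μ z * ((g₁ z - Complex.I * g₂ z) / 2)

/-- `f` is a quasiconformal mapping of `ℂ` onto itself: a homeomorphism of the plane
with locally square-integrable first generalized derivatives satisfying a nondegenerate
Beltrami equation a.e. -/
def IsQCOfPlane (f : ℂ → ℂ) : Prop :=
  (∃ F : ℂ ≃ₜ ℂ, ⇑F = f) ∧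
  ∃ g₁ g₂ : ℂ → ℂ, HasWeakPartialsOn f g₁ g₂ Set.univ ∧
    (∀ K : Set ℂ, IsCompact K →
      MeasureTheory.IntegrableOn (fun z => ‖g₁ z‖ ^ 2) K volume ∧
      MeasureTheory.IntegrableOn (fun z => ‖g₂ z‖ ^ 2) K volume) ∧
    ∃ μ : ℂ → ℂ, Measurable μ ∧ (∃ k : ℝ, k < 1 ∧ ∀ᵐ z ∂volume, ‖μ z‖ ≤ k) ∧
      ∀ᵐ z ∂volume,
        (g₁ z + Complex.I * g₂ z) / 2 = μ z * ((g₁ z - Complex.I * g₂ z) / 2)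

/-- The gradient of `u : ℂ → ℝ` as a vector in `ℝ²`. -/
noncomputable def gradVec (u : ℂ → ℝ) (z : ℂ) : Fin 2 → ℝ :=
  ![fderiv ℝ u z 1, fderiv ℝ u z Complex.I]

/-- `g` is the weak (generalized) gradient of `u` on `D`. -/
def HasWeakGradOn (u : ℂ → ℝ) (g : ℂ → Fin 2 → ℝ) (D : Set ℂ) : Prop :=
  MeasureTheory.LocallyIntegrableOn u D volume ∧
  MeasureTheory.LocallyIntegrableOn g D volume ∧
  ∀ φ : ℂ → ℝ, ContDiff ℝ (⊤ : ℕ∞) φ → HasCompactSupport φ → tsupport φ ⊆ D →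
    (∫ z in D, u z * fderiv ℝ φ z 1) = -(∫ z in D, g z 0 * φ z) ∧
    (∫ z in D, u z * fderiv ℝ φ z Complex.I) = -(∫ z in D, g z 1 * φ z)

/-- The class `𝓑` of symmetric, measurable, essentially bounded, uniformly elliptic
matrix functions with determinant identically `1` on `D`. -/
def InClassB (A : ℂ → Matrix (Fin 2) (Fin 2) ℝ) (D : Set ℂ) : Prop :=
  (∀ i j, Measurable fun z => A z i j) ∧
  (∀ z ∈ D, (A z).IsSymm) ∧
  (∀ z ∈ D, (A z).det = 1) ∧
  (∃ M : ℝ, ∀ᵐ z ∂(volume.restrict D), ∀ i j, |A z i j| ≤ M) ∧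
  (∃ ε : ℝ, 0 < ε ∧ ∀ z ∈ D, ∀ η : Fin 2 → ℝ,
    ε * (η 0 ^ 2 + η 1 ^ 2) ≤ ∑ i, (A z).mulVec η i * η i)

/-- `u` is `A`-harmonic on `D` (continuous weak solution of `div(A ∇u) = 0`). -/
def IsAHarmonicOn (A : ℂ → Matrix (Fin 2) (Fin 2) ℝ) (u : ℂ → ℝ) (D : Set ℂ) : Prop :=
  ContinuousOn u D ∧ ∃ g : ℂ → Fin 2 → ℝ, HasWeakGradOn u g D ∧
    ∀ φ : ℂ → ℝ, ContDiff ℝ (⊤ : ℕ∞) φ → HasCompactSupport φ → tsupport φ ⊆ D →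
      (∫ z in D, ∑ i, (A z).mulVec (g z) i * gradVec φ z i) = 0

/-- `u` of class `C¹` is `A`-harmonic on `D`. -/
def IsAHarmonicC1On (A : ℂ → Matrix (Fin 2) (Fin 2) ℝ) (u : ℂ → ℝ) (D : Set ℂ) : Prop :=
  ContDiffOn ℝ 1 u D ∧
    ∀ φ : ℂ → ℝ, ContDiff ℝ (⊤ : ℕ∞) φ → HasCompactSupport φ → tsupport φ ⊆ D →
      (∫ z in D, ∑ i, (A z).mulVec (gradVec u z) i * gradVec φ z i) = 0

/-- `u` is of class `C^{1+α}` on `D`: continuously differentiable with locally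
`α`-Hölder continuous partial derivatives. -/
def IsC1HolderOn (u : ℂ → ℝ) (α : ℝ≥0) (D : Set ℂ) : Prop :=
  ContDiffOn ℝ 1 u D ∧ ∀ z ∈ D, ∃ r > (0 : ℝ), ∃ C : ℝ≥0,
    HolderOnWith C α (fun w => gradVec u w) (D ∩ Metric.ball z r)

/-- The entries of the matrix function `A` are locally `α`-Hölder continuous on `D`. -/
def EntriesLocHolderOn (A : ℂ → Matrix (Fin 2) (Fin 2) ℝ) (α : ℝ≥0) (D : Set ℂ) : Prop :=
  ∀ z ∈ D, ∃ r > (0 : ℝ), ∃ C : ℝ≥0, ∀ i j,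
    HolderOnWith C α (fun w => A w i j) (D ∩ Metric.ball z r)

/-- `n` is the interior unit normal to `∂D` at `ζ`: a unit vector orthogonal to a
tangent direction of `∂D` at `ζ` and pointing into `D`. -/
def IsInteriorNormalAt (D : Set ℂ) (ζ n : ℂ) : Prop :=
  ‖n‖ = 1 ∧
  (∃ e : ℂ, HasTangentVia (frontier D) ζ e ∧ (n * (starRingEnd ℂ) e).re = 0) ∧
  ∃ ε > (0 : ℝ), ∀ t : ℝ, 0 < t → t < ε → ζ + t • n ∈ D

end

/-!
A quasiconformal homeomorphism `f` of the plane has a locally square-integrable generalized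
derivative with `‖f'‖² ≤ K · det f'`. The Jacobian determinant is a null Lagrangian, so the measure
that the density `det f'` induces on the image plane is a multiple of Lebesgue measure, and
`∫ ‖f'‖²` over `f⁻¹(B)` is at most a constant times the area of the disc `B`.

Suppose that `y` is much closer to `x` than `p`, but `f y` is not much closer to `f x` than `f p`.
Then every circle about `x` separating `y` from `p` contains two points whose images are far apart
on the scale of `dist (f p) (f x)`. The length–area method, applied to `f` truncated at that scale,
bounds the logarithmic width of the annulus of such circles by the area estimate, a contradiction if
`y` was close enough. Hence `f` is quasisymmetric: for some `δ > 0`, points `δ` times closer to `x`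
than `p` are mapped at least four times closer to `f x`.

Quasisymmetry gives both halves of the boundary condition. The segment between the images of two
points of `𝔻` at distance at most `δ` times the distance to the unit circle has bounded
quasihyperbolic length, so `k_D(f x, f 0)` is at most a multiple of `log (1 / (1 - ‖x‖))` plus a
constant; and iterating the inequality at a boundary point shows that the distance from `f x` to
`∂D` is at most a constant times a power of `1 - ‖x‖`.
-/

section Mollification

open scoped Convolution
open ContinuousLinearMap (lsmul)

theorem convolution_congr_of_eqOn_ball {E F : Type*} [NormedAddCommGroup E] [MeasurableSpace E]
    [NormedAddCommGroup F] [NormedSpace ℝ F] {ψ : E → ℝ} {g g' : E → F} {R : ℝ} {x : E}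
    (μ : Measure E) (hψ : Function.support ψ ⊆ ball 0 R) (h : EqOn g g' (ball x R)) :
    (ψ ⋆[lsmul ℝ ℝ, μ] g) x = (ψ ⋆[lsmul ℝ ℝ, μ] g') x := by
  refine integral_congr_ae (ae_of_all _ fun t => ?_)
  by_cases ht : ψ t = 0
  · simp only [ht, map_zero, zero_apply]
  · have hxt : x - t ∈ ball x R := by
      simpa using hψ (Function.mem_support.2 ht)
    simp only [h hxt]

variable {E F : Type*} [NormedAddCommGroup F] {p : ℝ≥0∞}

theorem rpow_lintegral_enorm_le_lintegral_rpow_enorm {Ω : Type*} [MeasurableSpace Ω]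
    {P : Measure Ω} [IsProbabilityMeasure P] {h : Ω → F} (hh : AEStronglyMeasurable h P)
    (hp₁ : 1 ≤ p) (hp : p ≠ ⊤) :
    (∫⁻ t, ‖h t‖ₑ ∂P) ^ p.toReal ≤ ∫⁻ t, ‖h t‖ₑ ^ p.toReal ∂P := by
  have hp₀ : p ≠ 0 := (one_pos.trans_le hp₁).ne'
  rw [← eLpNorm_one_eq_lintegral_enorm,
    lintegral_rpow_enorm_eq_rpow_eLpNorm' (ENNReal.toReal_pos hp₀ hp),
    ← eLpNorm_eq_eLpNorm' hp₀ hp]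
  gcongr
  exact eLpNorm_le_eLpNorm_of_exponent_le hp₁ hh

theorem eLpNorm_integral_le_of_ae_le [NormedSpace ℝ F] {X Ω : Type*} [MeasurableSpace X]
    [MeasurableSpace Ω] {μ : Measure X} [SFinite μ] {P : Measure Ω} [IsProbabilityMeasure P]
    {u : X → Ω → F} (hu : AEStronglyMeasurable (Function.uncurry u) (μ.prod P))
    (hp₁ : 1 ≤ p) (hp : p ≠ ⊤) {ε : ℝ≥0∞} (h : ∀ᵐ t ∂P, eLpNorm (u · t) p μ ≤ ε) :
    eLpNorm (fun x => ∫ t, u x t ∂P) p μ ≤ ε := by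
  have hp₀ : p ≠ 0 := (one_pos.trans_le hp₁).ne'
  have hr : 0 < p.toReal := ENNReal.toReal_pos hp₀ hp
  rw [← ENNReal.rpow_le_rpow_iff hr, eLpNorm_eq_eLpNorm' hp₀ hp,
    ← lintegral_rpow_enorm_eq_rpow_eLpNorm' hr]
  calc ∫⁻ x, ‖∫ t, u x t ∂P‖ₑ ^ p.toReal ∂μ
      ≤ ∫⁻ x, (∫⁻ t, ‖u x t‖ₑ ∂P) ^ p.toReal ∂μ := by
        gcongr; exact enorm_integral_le_lintegral_enorm _
    _ ≤ ∫⁻ x, ∫⁻ t, ‖u x t‖ₑ ^ p.toReal ∂P ∂μ :=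
        lintegral_mono_ae <| hu.prodMk_left.mono fun x hx =>
          rpow_lintegral_enorm_le_lintegral_rpow_enorm hx hp₁ hp
    _ = ∫⁻ t, ∫⁻ x, ‖u x t‖ₑ ^ p.toReal ∂μ ∂P :=
        lintegral_lintegral_swap (hu.enorm.pow_const _)
    _ ≤ ∫⁻ _, ε ^ p.toReal ∂P := by
        refine lintegral_mono_ae (h.mono fun t ht => ?_)
        rw [lintegral_rpow_enorm_eq_rpow_eLpNorm' hr, ← eLpNorm_eq_eLpNorm' hp₀ hp]
        gcongr
    _ = ε ^ p.toReal := by simp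

variable [NormedAddCommGroup E] [NormedSpace ℝ E] [FiniteDimensional ℝ E]
  [MeasurableSpace E] [BorelSpace E] {μ : Measure E} [μ.IsAddHaarMeasure] {g : E → F}

theorem tendsto_eLpNorm_comp_sub_sub_self (hp₁ : 1 ≤ p) (hp : p ≠ ⊤) (hg : MemLp g p μ) :
    Tendsto (fun t => eLpNorm (fun x => g (x - t) - g x) p μ) (𝓝 0) (𝓝 0) := by
  have : Fact (1 ≤ p) := ⟨hp₁⟩
  have : Fact (p ≠ ⊤) := ⟨hp⟩
  have hcont : Continuous fun t : E => edist (DomAddAct.mk (-t) +ᵥ hg.toLp g) (hg.toLp g) :=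
    ((DomAddAct.continuous_mk.comp continuous_neg).vadd continuous_const).edist continuous_const
  refine (hcont.tendsto' 0 0 (by simp)).congr fun t => ?_
  rw [DomAddAct.mk_vadd_toLp, Lp.edist_toLp_toLp]
  congr 1 with x
  simp [sub_eq_neg_add]

theorem isProbabilityMeasure_withDensity_normed (φ : ContDiffBump (0 : E)) :
    IsProbabilityMeasure (μ.withDensity fun t => ENNReal.ofReal (φ.normed μ t)) := by
  refine ⟨?_⟩
  rw [withDensity_apply _ MeasurableSet.univ, Measure.restrict_univ,
    ← ofReal_integral_eq_lintegral_ofReal φ.integrable_normed (ae_of_all _ φ.nonneg_normed),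
    φ.integral_normed, ENNReal.ofReal_one]

variable [NormedSpace ℝ F] [CompleteSpace F]

theorem normed_convolution_sub_eq_integral (φ : ContDiffBump (0 : E))
    (hg : LocallyIntegrable g μ) (x : E) :
    (φ.normed μ ⋆[lsmul ℝ ℝ, μ] g) x - g x =
      ∫ t, g (x - t) - g x ∂μ.withDensity fun t => ENNReal.ofReal (φ.normed μ t) := by
  have hconv : Integrable (fun t => φ.normed μ t • g (x - t)) μ :=
    (φ.hasCompactSupport_normed (μ := μ)).convolutionExists_left (lsmul ℝ ℝ)
      φ.continuous_normed hg x
  rw [integral_withDensity_eq_integral_toReal_smul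
      φ.continuous_normed.measurable.ennreal_ofReal (by simp)]
  simp only [ENNReal.toReal_ofReal (φ.nonneg_normed _), smul_sub]
  rw [integral_sub hconv (φ.integrable_normed.smul_const _), φ.integral_normed_smul]
  rfl

theorem eLpNorm_normed_convolution_sub_le (φ : ContDiffBump (0 : E)) (hp₁ : 1 ≤ p) (hp : p ≠ ⊤)
    (hg : MemLp g p μ) {ε : ℝ≥0∞}
    (h : ∀ t ∈ ball (0 : E) φ.rOut, eLpNorm (fun x => g (x - t) - g x) p μ ≤ ε) :
    eLpNorm ((φ.normed μ ⋆[lsmul ℝ ℝ, μ] g) - g) p μ ≤ ε := by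
  have := isProbabilityMeasure_withDensity_normed (μ := μ) φ
  have hmeas : Measurable fun t => ENNReal.ofReal (φ.normed μ t) :=
    φ.continuous_normed.measurable.ennreal_ofReal
  have hrepr : (φ.normed μ ⋆[lsmul ℝ ℝ, μ] g) - g = fun x =>
      ∫ t, g (x - t) - g x ∂μ.withDensity fun t => ENNReal.ofReal (φ.normed μ t) :=
    funext (normed_convolution_sub_eq_integral φ (hg.locallyIntegrable hp₁))
  rw [hrepr]
  refine eLpNorm_integral_le_of_ae_le ?_ hp₁ hp ?_
  · have hsub : AEStronglyMeasurable (fun q : E × E => g (q.1 - q.2)) (μ.prod μ) :=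
      hg.aestronglyMeasurable.comp_quasiMeasurePreserving
        (quasiMeasurePreserving_sub_of_right_invariant μ μ)
    exact (hsub.sub hg.aestronglyMeasurable.comp_fst).mono_ac
      (Measure.AbsolutelyContinuous.rfl.prod (withDensity_absolutelyContinuous _ _))
  · rw [ae_withDensity_iff hmeas]
    refine ae_of_all _ fun t ht => h t ?_
    rw [← φ.support_normed_eq (μ := μ), Function.mem_support]
    contrapose! ht
    rw [ht, ENNReal.ofReal_zero]

variable {ι : Type*} {l : Filter ι} {φ : ι → ContDiffBump (0 : E)}

theorem tendsto_eLpNorm_normed_convolution_sub (hφ : Tendsto (fun i => (φ i).rOut) l (𝓝 0))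
    (hp₁ : 1 ≤ p) (hp : p ≠ ⊤) (hg : MemLp g p μ) :
    Tendsto (fun i => eLpNorm (((φ i).normed μ ⋆[lsmul ℝ ℝ, μ] g) - g) p μ) l (𝓝 0) := by
  refine ENNReal.tendsto_nhds_zero.2 fun ε hε => ?_
  obtain ⟨δ, hδ, hball⟩ := Metric.eventually_nhds_iff_ball.1 <|
    ENNReal.tendsto_nhds_zero.1 (tendsto_eLpNorm_comp_sub_sub_self hp₁ hp hg) ε hε
  filter_upwards [hφ.eventually_lt_const hδ] with i hi
  exact eLpNorm_normed_convolution_sub_le (φ i) hp₁ hp hg fun t ht =>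
    hball t (ball_subset_ball hi.le ht)

theorem tendsto_eLpNorm_restrict_normed_convolution_sub
    (hφ : Tendsto (fun i => (φ i).rOut) l (𝓝 0)) (hp₁ : 1 ≤ p) (hp : p ≠ ⊤)
    (hg : ∀ S, IsCompact S → MemLp g p (μ.restrict S)) {S : Set E} (hS : IsCompact S) :
    Tendsto (fun i => eLpNorm (((φ i).normed μ ⋆[lsmul ℝ ℝ, μ] g) - g) p (μ.restrict S)) l
      (𝓝 0) := by
  let g₁ : E → F := (cthickening 1 S).indicator g
  have hg₁ : MemLp g₁ p μ :=
    (memLp_indicator_iff_restrict isClosed_cthickening.measurableSet).2 (hg _ hS.cthickening)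
  refine tendsto_of_tendsto_of_tendsto_of_le_of_le' tendsto_const_nhds
    (tendsto_eLpNorm_normed_convolution_sub hφ hp₁ hp hg₁) (Eventually.of_forall fun _ => zero_le)
    ((hφ.eventually_lt_const one_pos).mono fun i hi => ?_)
  refine (eLpNorm_congr_ae ?_).trans_le (eLpNorm_mono_measure _ Measure.restrict_le_self)
  refine (ae_restrict_iff' hS.measurableSet).2 (ae_of_all _ fun x hx => ?_)
  have heqOn : EqOn g g₁ (ball x (φ i).rOut) := fun y hy =>
    (indicator_of_mem (mem_cthickening_of_dist_le y x 1 S hx (hy.le.trans hi.le)) g).symm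
  simp only [Pi.sub_apply, heqOn (mem_ball_self (φ i).rOut_pos),
    convolution_congr_of_eqOn_ball _ (φ i).support_normed_eq.subset heqOn]

theorem tendstoLocallyUniformly_normed_convolution (hφ : Tendsto (fun i => (φ i).rOut) l (𝓝 0))
    (hg : Continuous g) :
    TendstoLocallyUniformly (fun i => (φ i).normed μ ⋆[lsmul ℝ ℝ, μ] g) g l := by
  refine tendstoLocallyUniformly_iff_forall_tendsto.2 fun x => ?_
  have hconv : Tendsto (fun q : ι × E => ((φ q.1).normed μ ⋆[lsmul ℝ ℝ, μ] g) q.2) (l ×ˢ 𝓝 x)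
      (𝓝 (g x)) :=
    ContDiffBump.convolution_tendsto_right (φ := fun q : ι × E => φ q.1) (g := fun _ => g)
      (hφ.comp tendsto_fst) (Eventually.of_forall fun _ => hg.aestronglyMeasurable)
      ((hg.tendsto x).comp tendsto_snd) tendsto_snd
  exact (((hg.tendsto x).comp tendsto_snd).prodMk_nhds hconv).mono_right (nhds_le_uniformity _)

end Mollification

section WeakDerivative

open scoped Convolution ContDiff
open ContinuousLinearMap (lsmul)

variable {E F : Type*} [NormedAddCommGroup E] [NormedSpace ℝ E] [MeasurableSpace E]
  [NormedAddCommGroup F] [NormedSpace ℝ F]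

/-- `f'` is the generalized (weak) total derivative of `f` with respect to `μ`: integration by parts
against smooth compactly supported functions holds in every direction `v`. -/
structure IsWeakFDeriv (f : E → F) (f' : E → E →L[ℝ] F) (μ : Measure E) : Prop where
  locallyIntegrable : LocallyIntegrable f μ
  locallyIntegrable_deriv : LocallyIntegrable f' μ
  integral_fderiv_smul : ∀ φ : E → ℝ, ContDiff ℝ ∞ φ → HasCompactSupport φ → ∀ v,
    ∫ x, fderiv ℝ φ x v • f x ∂μ = -∫ x, φ x • f' x v ∂μ

namespace IsWeakFDeriv

variable [FiniteDimensional ℝ E] [BorelSpace E] {μ : Measure E} [μ.IsAddHaarMeasure]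
  {f : E → F} {f' : E → E →L[ℝ] F}

theorem fderiv_convolution (h : IsWeakFDeriv f f' μ) {ψ : E → ℝ} (hψ : ContDiff ℝ ∞ ψ)
    (hψc : HasCompactSupport ψ) (x : E) :
    fderiv ℝ (ψ ⋆[lsmul ℝ ℝ, μ] f) x = (ψ ⋆[lsmul ℝ ℝ, μ] f') x := by
  have hexists := (hψc.fderiv ℝ).convolutionExists_left (μ := μ)
    ((lsmul ℝ ℝ : ℝ →L[ℝ] F →L[ℝ] F).precompL E) (hψ.continuous_fderiv (by simp))
    h.locallyIntegrable x
  have hexists' := hψc.convolutionExists_left (μ := μ) (lsmul ℝ ℝ) hψ.continuous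
    h.locallyIntegrable_deriv x
  have hparts (v : E) := h.integral_fderiv_smul (fun t => ψ (x - t))
    (hψ.comp (contDiff_const.sub contDiff_id)) (hψc.comp_homeomorph (Homeomorph.subLeft x)) v
  have hchain (t : E) : fderiv ℝ (fun t => ψ (x - t)) t = -fderiv ℝ ψ (x - t) := by
    simpa [Function.comp_def] using ((hψ.differentiable (by simp) (x - t)).hasFDerivAt.comp t
      ((hasFDerivAt_id t).const_sub x)).fderiv
  simp only [hchain, neg_apply, neg_smul, integral_neg, neg_inj] at hparts
  ext v
  calc fderiv ℝ (ψ ⋆[lsmul ℝ ℝ, μ] f) x v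
      = ∫ t, fderiv ℝ ψ t v • f (x - t) ∂μ := by
        rw [(hψc.hasFDerivAt_convolution_left (lsmul ℝ ℝ) (hψ.of_le (by simp))
          h.locallyIntegrable x).fderiv, convolution_def,
          ContinuousLinearMap.integral_apply hexists]
        rfl
    _ = ∫ t, fderiv ℝ ψ (x - t) v • f t ∂μ := by
        rw [← integral_sub_left_eq_self _ μ x]; simp
    _ = ∫ t, ψ (x - t) • f' t v ∂μ := hparts v
    _ = ∫ t, ψ t • f' (x - t) v ∂μ := by
        rw [← integral_sub_left_eq_self _ μ x]; simp
    _ = (ψ ⋆[lsmul ℝ ℝ, μ] f') x v := by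
        rw [convolution_def, ContinuousLinearMap.integral_apply hexists']
        rfl

theorem exists_smooth_approx [CompleteSpace F] (h : IsWeakFDeriv f f' μ) (hf : Continuous f)
    {p : ℝ≥0∞} (hp₁ : 1 ≤ p) (hp : p ≠ ⊤)
    (hf' : ∀ S, IsCompact S → MemLp f' p (μ.restrict S)) :
    ∃ G : ℕ → E → F, (∀ n, ContDiff ℝ ∞ (G n)) ∧ TendstoLocallyUniformly G f atTop ∧
      ∀ S, IsCompact S →
        Tendsto (fun n => eLpNorm (fderiv ℝ (G n) - f') p (μ.restrict S)) atTop (𝓝 0) := by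
  have hr (n : ℕ) : 0 < ((n : ℝ) + 1)⁻¹ := by positivity
  let φ (n : ℕ) : ContDiffBump (0 : E) :=
    ⟨((n : ℝ) + 1)⁻¹ / 2, ((n : ℝ) + 1)⁻¹, half_pos (hr n), half_lt_self (hr n)⟩
  have hφ : Tendsto (fun n => (φ n).rOut) atTop (𝓝 0) := by
    simpa [one_div] using tendsto_one_div_add_atTop_nhds_zero_nat (𝕜 := ℝ)
  refine ⟨fun n => (φ n).normed μ ⋆[lsmul ℝ ℝ, μ] f, fun n => ?_,
    tendstoLocallyUniformly_normed_convolution hφ hf, fun S hS => ?_⟩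
  · exact (φ n).hasCompactSupport_normed.contDiff_convolution_left _ (φ n).contDiff_normed
      h.locallyIntegrable
  · refine (tendsto_eLpNorm_restrict_normed_convolution_sub hφ hp₁ hp hf' hS).congr fun n => ?_
    congr 2
    exact (funext <| h.fderiv_convolution (φ n).contDiff_normed
      (φ n).hasCompactSupport_normed).symm

end IsWeakFDeriv

end WeakDerivative

section BilinearLimits

variable {α ι E F G : Type*} [MeasurableSpace α] {μ : Measure α} {l : Filter ι}
  [NormedAddCommGroup E] [NormedAddCommGroup F] [NormedAddCommGroup G]

theorem memLp_restrict_of_isCompact {X : Type*} [TopologicalSpace X] [MeasurableSpace X]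
    [OpensMeasurableSpace X] [SecondCountableTopologyEither X E] {ν : Measure X}
    [IsFiniteMeasureOnCompacts ν] {S : Set X} (hS : IsCompact S) (hSm : MeasurableSet S)
    {u : X → E} (hu : Continuous u) {p : ℝ≥0∞} : MemLp u p (ν.restrict S) := by
  have : IsFiniteMeasure (ν.restrict S) := isFiniteMeasure_restrict.2 hS.measure_ne_top
  obtain ⟨C, hC⟩ := hS.exists_bound_of_continuousOn hu.continuousOn
  exact (memLp_top_of_bound hu.aestronglyMeasurable C
    ((ae_restrict_iff' hSm).2 (ae_of_all _ hC))).mono_exponent le_top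

theorem tendsto_eLpNorm_top_restrict_sub {S : Set α} (hS : MeasurableSet S) {a : ι → α → E}
    {a₀ : α → E} (h : TendstoUniformlyOn a a₀ l S) :
    Tendsto (fun i => eLpNorm (a i - a₀) ∞ (μ.restrict S)) l (𝓝 0) := by
  refine ENNReal.tendsto_nhds_zero.2 fun ε hε => ?_
  filter_upwards [EMetric.tendstoUniformlyOn_iff.1 h ε hε] with i hi
  refine eLpNormEssSup_le_of_ae_enorm_bound ?_
  filter_upwards [ae_restrict_mem hS] with x hx
  rw [Pi.sub_apply, ← edist_eq_enorm_sub, edist_comm]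
  exact (hi x hx).le

variable [NormedSpace ℝ E] [NormedSpace ℝ F] [NormedSpace ℝ G]

theorem eLpNorm_bilin_le (B : E →L[ℝ] F →L[ℝ] G) {p q r : ℝ≥0∞} [ENNReal.HolderTriple p q r]
    {a : α → E} {b : α → F} (ha : AEStronglyMeasurable a μ) (hb : AEStronglyMeasurable b μ) :
    eLpNorm (fun x => B (a x) (b x)) r μ ≤ ‖B‖ₑ * eLpNorm a p μ * eLpNorm b q μ :=
  eLpNorm_le_eLpNorm_mul_eLpNorm_of_nnnorm ha hb (B · ·) ‖B‖₊ <| ae_of_all _ fun x =>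
    B.le_opNorm₂ (a x) (b x)

theorem tendsto_eLpNorm_bilin_sub (B : E →L[ℝ] F →L[ℝ] G) {p q r : ℝ≥0∞}
    [ENNReal.HolderTriple p q r] (hr : 1 ≤ r) {a : ι → α → E} {a₀ : α → E} {b : ι → α → F}
    {b₀ : α → F} (ham : ∀ i, AEStronglyMeasurable (a i) μ)
    (hbm : ∀ i, AEStronglyMeasurable (b i) μ) (ha₀ : MemLp a₀ p μ) (hb₀ : MemLp b₀ q μ)
    (ha : Tendsto (fun i => eLpNorm (a i - a₀) p μ) l (𝓝 0))
    (hb : Tendsto (fun i => eLpNorm (b i - b₀) q μ) l (𝓝 0)) :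
    Tendsto (fun i => eLpNorm ((fun x => B (a i x) (b i x)) - fun x => B (a₀ x) (b₀ x)) r μ) l
      (𝓝 0) := by
  have hbound (i : ι) : eLpNorm ((fun x => B (a i x) (b i x)) - fun x => B (a₀ x) (b₀ x)) r μ ≤
      ‖B‖ₑ * eLpNorm (a i - a₀) p μ * eLpNorm (b i - b₀) q μ +
        ‖B‖ₑ * eLpNorm (a i - a₀) p μ * eLpNorm b₀ q μ +
        ‖B‖ₑ * eLpNorm a₀ p μ * eLpNorm (b i - b₀) q μ := by
    have ham' := (ham i).sub ha₀.aestronglyMeasurable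
    have hbm' := (hbm i).sub hb₀.aestronglyMeasurable
    have hsplit : ((fun x => B (a i x) (b i x)) - fun x => B (a₀ x) (b₀ x)) =
        (fun x => B ((a i - a₀) x) ((b i - b₀) x)) + (fun x => B ((a i - a₀) x) (b₀ x)) +
          fun x => B (a₀ x) ((b i - b₀) x) := by
      ext x
      simp only [Pi.add_apply, Pi.sub_apply, map_sub, sub_apply]
      abel
    rw [hsplit]
    have hB : ∀ {u v}, AEStronglyMeasurable u μ → AEStronglyMeasurable v μ →
        AEStronglyMeasurable (fun x => B (u x) (v x)) μ := fun hu hv =>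
      B.aestronglyMeasurable_comp₂ hu hv
    refine (eLpNorm_add_le ((hB ham' hbm').add (hB ham' hb₀.1)) (hB ha₀.1 hbm') hr).trans ?_
    gcongr
    · refine (eLpNorm_add_le (hB ham' hbm') (hB ham' hb₀.1) hr).trans ?_
      gcongr
      · exact eLpNorm_bilin_le B ham' hbm'
      · exact eLpNorm_bilin_le B ham' hb₀.1
    · exact eLpNorm_bilin_le B ha₀.1 hbm'
  refine tendsto_of_tendsto_of_tendsto_of_le_of_le tendsto_const_nhds ?_ (fun _ => zero_le) hbound
  have ha' : Tendsto (fun i => ‖B‖ₑ * eLpNorm (a i - a₀) p μ) l (𝓝 0) := by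
    simpa using ENNReal.Tendsto.const_mul ha (.inr enorm_ne_top)
  have hprod := ENNReal.Tendsto.mul ha' (.inr ENNReal.zero_ne_top) hb (.inr ENNReal.zero_ne_top)
  have hleft := ENNReal.Tendsto.mul_const (b := eLpNorm b₀ q μ) ha' (.inr hb₀.2.ne)
  have hright := ENNReal.Tendsto.const_mul (a := ‖B‖ₑ * eLpNorm a₀ p μ) hb
    (.inr (ENNReal.mul_ne_top enorm_ne_top ha₀.2.ne))
  simpa using (hprod.add hleft).add hright

end BilinearLimits

section Jacobian

attribute [local instance] Complex.finrank_real_complex_fact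

theorem clm_apply_eq_re_smul_add_im_smul {F : Type*} [NormedAddCommGroup F] [NormedSpace ℝ F]
    (L : ℂ →L[ℝ] F) (z : ℂ) : L z = z.re • L 1 + z.im • L I := by
  have hz : z = z.re • (1 : ℂ) + z.im • I := by simp
  conv_lhs => rw [hz, map_add, map_smul, map_smul]

theorem areaForm'_eq_re_mul_im_sub (z w : ℂ) :
    Complex.orientation.areaForm' z w = z.re * w.im - z.im * w.re := by
  simp [Complex.areaForm, sub_eq_add_neg]

theorem det_eq_areaForm (A : ℂ →L[ℝ] ℂ) : A.det = Complex.orientation.areaForm' (A 1) (A I) := by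
  rw [ContinuousLinearMap.det, ← LinearMap.det_toMatrix Complex.basisOneI, Matrix.det_fin_two,
    areaForm'_eq_re_mul_im_sub, mul_comm (A 1).im]
  simp [LinearMap.toMatrix_apply]

theorem apply_mul_areaForm (α : ℂ →L[ℝ] ℝ) (e p q : ℂ) :
    α e * Complex.orientation.areaForm' p q =
      α p * Complex.orientation.areaForm' e q - α q * Complex.orientation.areaForm' e p := by
  simp only [clm_apply_eq_re_smul_add_im_smul α e, clm_apply_eq_re_smul_add_im_smul α p,
    clm_apply_eq_re_smul_add_im_smul α q, areaForm'_eq_re_mul_im_sub, smul_eq_mul]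
  ring

/-- The bilinear form `(A, B) ↦ ω (A 1) (B I)`, whose diagonal is the determinant. -/
noncomputable def detBilin : (ℂ →L[ℝ] ℂ) →L[ℝ] (ℂ →L[ℝ] ℂ) →L[ℝ] ℝ :=
  (Complex.orientation.areaForm' : ℂ →L[ℝ] ℂ →L[ℝ] ℝ).bilinearComp
    (ContinuousLinearMap.apply ℝ ℂ 1) (ContinuousLinearMap.apply ℝ ℂ I)

theorem detBilin_self (A : ℂ →L[ℝ] ℂ) : detBilin A A = A.det := (det_eq_areaForm A).symm

variable {α ι : Type*} [MeasurableSpace α] {μ : Measure α} {l : Filter ι}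

theorem integrable_det {A : α → ℂ →L[ℝ] ℂ} (hA : MemLp A 2 μ) :
    Integrable (fun x => (A x).det) μ := by
  simp only [← detBilin_self]
  exact memLp_one_iff_integrable.1 (detBilin.memLp_of_bilin 1 hA hA)

theorem tendsto_eLpNorm_det_sub {A : ι → α → ℂ →L[ℝ] ℂ} {A₀ : α → ℂ →L[ℝ] ℂ}
    (hAm : ∀ i, AEStronglyMeasurable (A i) μ) (hA₀ : MemLp A₀ 2 μ)
    (hA : Tendsto (fun i => eLpNorm (A i - A₀) 2 μ) l (𝓝 0)) :
    Tendsto (fun i => eLpNorm ((fun x => (A i x).det) - fun x => (A₀ x).det) 1 μ) l (𝓝 0) := by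
  simp only [← detBilin_self]
  exact tendsto_eLpNorm_bilin_sub detBilin le_rfl hAm hAm hA₀ hA₀ hA hA

end Jacobian

section NullLagrangian

open scoped ContDiff
attribute [local instance] Complex.finrank_real_complex_fact

variable {E : Type*} [NormedAddCommGroup E] [NormedSpace ℝ E]

theorem exists_contDiff_hasCompactSupport_eventuallyEq_one [FiniteDimensional ℝ E] {K : Set E}
    (hK : IsCompact K) :
    ∃ φ : E → ℝ, ContDiff ℝ ∞ φ ∧ HasCompactSupport φ ∧ (∀ x, φ x ∈ Icc 0 1) ∧
      ∀ x ∈ K, φ =ᶠ[𝓝 x] 1 := by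
  obtain ⟨r, hr, hKr⟩ := hK.isBounded.subset_ball_lt 0 (0 : E)
  let φ : ContDiffBump (0 : E) := ⟨r, r + 1, hr, lt_add_one r⟩
  exact ⟨φ, φ.contDiff, φ.hasCompactSupport, fun x => ⟨φ.nonneg, φ.le_one⟩,
    fun x hx => φ.eventuallyEq_one_of_mem_ball (hKr hx)⟩

theorem eventually_mapsTo_of_tendstoUniformlyOn {X Y ι : Type*} [TopologicalSpace X]
    [PseudoMetricSpace Y] {F : ι → X → Y} {f : X → Y} {l : Filter ι} {A : Set X} {U : Set Y}
    (hF : TendstoUniformlyOn F f l A) (hA : IsCompact A) (hf : ContinuousOn f A) (hU : IsOpen U)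
    (hAU : MapsTo f A U) : ∀ᶠ i in l, MapsTo (F i) A U := by
  obtain ⟨δ, hδ, hsub⟩ := (hA.image_of_continuousOn hf).exists_thickening_subset_open hU
    hAU.image_subset
  filter_upwards [Metric.tendstoUniformlyOn_iff.1 hF δ hδ] with i hi x hx
  exact hsub (mem_thickening_iff.2 ⟨f x, mem_image_of_mem f hx, by simpa [dist_comm] using hi x hx⟩)

theorem tendstoUniformlyOn_mul_left_of_abs_le_one {X ι : Type*} {F : ι → X → ℝ} {f φ : X → ℝ}
    {l : Filter ι} {S : Set X} (hφ : ∀ x, |φ x| ≤ 1) (hF : TendstoUniformlyOn F f l S) :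
    TendstoUniformlyOn (fun i x => φ x * F i x) (fun x => φ x * f x) l S := by
  refine Metric.tendstoUniformlyOn_iff.2 fun ε hε => ?_
  filter_upwards [Metric.tendstoUniformlyOn_iff.1 hF ε hε] with i hi x hx
  rw [Real.dist_eq, ← mul_sub, abs_mul]
  exact (mul_le_of_le_one_left (abs_nonneg _) (hφ x)).trans_lt (hi x hx)

theorem eventually_fderiv_eq_zero_of_comp_ne_zero {Y ι : Type*} [PseudoMetricSpace Y]
    {F : ι → E → Y} {f : E → Y} {l : Filter ι} (hf : Continuous f) {h : Y → ℝ} {φ : E → ℝ}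
    (hφc : HasCompactSupport φ) (hφ : ∀ x ∈ f ⁻¹' tsupport h, φ =ᶠ[𝓝 x] 1)
    (hF : TendstoUniformlyOn F f l (tsupport φ)) :
    ∀ᶠ i in l, ∀ x, h (F i x) ≠ 0 → fderiv ℝ φ x = 0 := by
  have hmaps : MapsTo f (tsupport (fderiv ℝ φ)) (tsupport h)ᶜ := fun x hx hfx =>
    notMem_tsupport_iff_eventuallyEq.2 ((hφ x hfx).fderiv.trans (by simp)) hx
  filter_upwards [eventually_mapsTo_of_tendstoUniformlyOn
    (hF.mono (tsupport_fderiv_subset ℝ)) (hφc.fderiv ℝ) hf.continuousOn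
    (isClosed_tsupport h).isOpen_compl hmaps] with i hi x hx
  exact image_eq_zero_of_notMem_tsupport fun hxφ => hi hxφ (subset_tsupport h hx)

section

variable [FiniteDimensional ℝ E] [MeasurableSpace E] [BorelSpace E] {μ : Measure E}
  [μ.IsAddHaarMeasure] {H v : E → ℝ}

theorem integral_fderiv_mul_fderiv_eq_neg_integral_mul_fderiv_fderiv (hH : ContDiff ℝ 1 H)
    (hHc : HasCompactSupport H) (hv : ContDiff ℝ 2 v) (a b : E) :
    ∫ x, fderiv ℝ H x a * fderiv ℝ v x b ∂μ = -∫ x, H x * fderiv ℝ (fderiv ℝ v) x a b ∂μ := by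
  have hv' : ContDiff ℝ 1 (fderiv ℝ v) := hv.fderiv_right (by norm_num)
  have hvb : ContDiff ℝ 1 fun x => fderiv ℝ v x b := hv'.clm_apply contDiff_const
  have hderiv (x : E) : fderiv ℝ (fun x => fderiv ℝ v x b) x a = fderiv ℝ (fderiv ℝ v) x a b := by
    rw [fderiv_clm_apply (hv'.differentiable (by simp) x) (by fun_prop)]
    simp
  have hvab : Continuous fun x => fderiv ℝ (fun x => fderiv ℝ v x b) x a :=
    (hvb.continuous_fderiv (by simp)).clm_apply continuous_const
  have hHa : Continuous fun x => fderiv ℝ H x a :=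
    (hH.continuous_fderiv (by simp)).clm_apply continuous_const
  simp only [← hderiv]
  rw [integral_mul_fderiv_eq_neg_fderiv_mul_of_integrable (f := H), neg_neg]
  · exact (hHa.mul hvb.continuous).integrable_of_hasCompactSupport
      (hHc.fderiv_apply (𝕜 := ℝ) a).mul_right
  · exact (hH.continuous.mul hvab).integrable_of_hasCompactSupport hHc.mul_right
  · exact (hH.continuous.mul hvb.continuous).integrable_of_hasCompactSupport hHc.mul_right
  · exact fun x _ => hH.differentiable (by simp) x
  · exact fun x _ => hvb.differentiable (by simp) x

theorem integral_fderiv_mul_fderiv_sub_eq_zero (hH : ContDiff ℝ 1 H) (hHc : HasCompactSupport H)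
    (hv : ContDiff ℝ 2 v) (a b : E) :
    ∫ x, (fderiv ℝ H x a * fderiv ℝ v x b - fderiv ℝ H x b * fderiv ℝ v x a) ∂μ = 0 := by
  have hint (a b : E) : Integrable (fun x => fderiv ℝ H x a * fderiv ℝ v x b) μ :=
    (((hH.continuous_fderiv (by simp)).clm_apply continuous_const).mul
      ((hv.continuous_fderiv (by simp)).clm_apply continuous_const)).integrable_of_hasCompactSupport
        (hHc.fderiv_apply (𝕜 := ℝ) a).mul_right
  have hsymm (x : E) : fderiv ℝ (fderiv ℝ v) x a b = fderiv ℝ (fderiv ℝ v) x b a :=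
    (hv.contDiffAt.isSymmSndFDerivAt (by simp)).eq a b
  rw [integral_sub (hint a b) (hint b a),
    integral_fderiv_mul_fderiv_eq_neg_integral_mul_fderiv_fderiv hH hHc hv,
    integral_fderiv_mul_fderiv_eq_neg_integral_mul_fderiv_fderiv hH hHc hv]
  simp only [hsymm, sub_self]

end

/-- The integrand is `d(φ · h ∘ F) ∧ d(W(e, F))` for the area form `W`, hence exact. -/
theorem integral_mul_fderiv_comp_mul_det_fderiv_eq_zero {F : ℂ → ℂ} {h φ : ℂ → ℝ}
    (hF : ContDiff ℝ 2 F) (hh : ContDiff ℝ 1 h) (hφ : ContDiff ℝ 1 φ)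
    (hφc : HasCompactSupport φ) (hhφ : ∀ z, h (F z) ≠ 0 → fderiv ℝ φ z = 0) (e : ℂ) :
    ∫ z, φ z * fderiv ℝ h (F z) e * (fderiv ℝ F z).det = 0 := by
  let W : ℂ →L[ℝ] ℂ →L[ℝ] ℝ := Complex.orientation.areaForm'
  have hF₁ (z : ℂ) : HasFDerivAt F (fderiv ℝ F z) z := (hF.differentiable (by simp) z).hasFDerivAt
  have hderivH (z p : ℂ) : fderiv ℝ (fun z => φ z * h (F z)) z p =
      φ z * fderiv ℝ h (F z) (fderiv ℝ F z p) := by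
    have hprod : HasFDerivAt (fun z => φ z * h (F z)) _ z :=
      (hφ.differentiable (by simp) z).hasFDerivAt.mul
        ((hh.differentiable (by simp) (F z)).hasFDerivAt.comp z (hF₁ z))
    rw [hprod.fderiv]
    by_cases hz : h (F z) = 0
    · simp [hz]
    · simp [hhφ z hz]
  have hderivW (z p : ℂ) : fderiv ℝ (fun z => W e (F z)) z p = W e (fderiv ℝ F z p) := by
    have hcomp : HasFDerivAt (fun z => W e (F z)) _ z := (W e).hasFDerivAt.comp z (hF₁ z)
    rw [hcomp.fderiv]
    rfl
  have hexact := integral_fderiv_mul_fderiv_sub_eq_zero (μ := volume)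
    (hφ.mul (hh.comp (hF.of_le (by norm_num)))) hφc.mul_right ((W e).contDiff.comp hF) 1 I
  simp only [Function.comp_def, hderivH, hderivW] at hexact
  rw [← hexact]
  refine integral_congr_ae (ae_of_all _ fun z => ?_)
  simp only [det_eq_areaForm]
  linear_combination φ z * apply_mul_areaForm (fderiv ℝ h (F z)) e (fderiv ℝ F z 1) (fderiv ℝ F z I)

theorem tendsto_setIntegral_mul_det {X ι : Type*} [TopologicalSpace X] [MeasurableSpace X]
    [OpensMeasurableSpace X] {μ : Measure X} [IsFiniteMeasureOnCompacts μ] {l : Filter ι}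
    {S : Set X} (hS : IsCompact S)
    (hSm : MeasurableSet S) {a : ι → X → ℝ} {a₀ : X → ℝ} (ha : ∀ i, Continuous (a i))
    (ha₀ : Continuous a₀) (haS : TendstoUniformlyOn a a₀ l S) {A : ι → X → ℂ →L[ℝ] ℂ}
    {A₀ : X → ℂ →L[ℝ] ℂ} (hA : ∀ i, MemLp (A i) 2 (μ.restrict S))
    (hA₀ : MemLp A₀ 2 (μ.restrict S))
    (hAS : Tendsto (fun i => eLpNorm (A i - A₀) 2 (μ.restrict S)) l (𝓝 0)) :
    Tendsto (fun i => ∫ x in S, a i x * (A i x).det ∂μ) l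
      (𝓝 (∫ x in S, a₀ x * (A₀ x).det ∂μ)) := by
  have hbdd {u : X → ℝ} (hu : Continuous u) : MemLp u ⊤ (μ.restrict S) :=
    memLp_restrict_of_isCompact hS hSm hu
  have hmul {u : X → ℝ} {M : X → ℂ →L[ℝ] ℂ} (hu : Continuous u) (hM : MemLp M 2 (μ.restrict S)) :
      IntegrableOn (fun x => u x * (M x).det) S μ :=
    memLp_one_iff_integrable.1 ((ContinuousLinearMap.mul ℝ ℝ).memLp_of_bilin 1 (hbdd hu)
      (memLp_one_iff_integrable.2 (integrable_det hM)))
  refine tendsto_integral_of_L1' _ (hmul ha₀ hA₀).1 (.of_forall fun i => hmul (ha i) (hA i)) ?_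
  exact tendsto_eLpNorm_bilin_sub (ContinuousLinearMap.mul ℝ ℝ) le_rfl
    (fun i => (hbdd (ha i)).1) (fun i => (integrable_det (hA i)).1) (hbdd ha₀)
    (memLp_one_iff_integrable.2 (integrable_det hA₀)) (tendsto_eLpNorm_top_restrict_sub hSm haS)
    (tendsto_eLpNorm_det_sub (fun i => (hA i).1) hA₀ hAS)

theorem IsWeakFDeriv.integral_fderiv_comp_mul_det_eq_zero {f : ℂ → ℂ} {f' : ℂ → ℂ →L[ℝ] ℂ}
    (hf : IsWeakFDeriv f f' volume) (hfc : Continuous f)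
    (hf' : ∀ S, IsCompact S → MemLp f' 2 (volume.restrict S)) {h : ℂ → ℝ} (hh : ContDiff ℝ 1 h)
    (hhc : HasCompactSupport h) (hpre : IsCompact (f ⁻¹' tsupport h)) (e : ℂ) :
    ∫ z, fderiv ℝ h (f z) e * (f' z).det = 0 := by
  obtain ⟨φ, hφ, hφc, hφI, hφ₁⟩ := exists_contDiff_hasCompactSupport_eventuallyEq_one hpre
  obtain ⟨G, hG, hGf, hG'⟩ := hf.exists_smooth_approx hfc one_le_two (by simp) hf'
  have hGφ : TendstoUniformlyOn G f atTop (tsupport φ) :=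
    (tendstoLocallyUniformlyOn_iff_tendstoUniformlyOn_of_compact hφc).1
      hGf.tendstoLocallyUniformlyOn
  have hd : Continuous fun w => fderiv ℝ h w e :=
    (hh.continuous_fderiv (by simp)).clm_apply continuous_const
  have hunif : TendstoUniformlyOn (fun n z => φ z * fderiv ℝ h (G n z) e)
      (fun z => φ z * fderiv ℝ h (f z) e) atTop (tsupport φ) :=
    tendstoUniformlyOn_mul_left_of_abs_le_one
      (fun z => abs_le.2 ⟨by linarith [(hφI z).1], (hφI z).2⟩)
      (((hhc.fderiv_apply (𝕜 := ℝ) e).uniformContinuous_of_continuous hd).comp_tendstoUniformlyOn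
        hGφ)
  have hrestrict (d' J : ℂ → ℝ) :
      ∫ z in tsupport φ, φ z * d' z * J z = ∫ z, φ z * d' z * J z :=
    setIntegral_eq_integral_of_forall_compl_eq_zero fun z hz => by
      simp [image_eq_zero_of_notMem_tsupport hz]
  have hlim : Tendsto (fun n => ∫ z, φ z * fderiv ℝ h (G n z) e * (fderiv ℝ (G n) z).det) atTop
      (𝓝 (∫ z, φ z * fderiv ℝ h (f z) e * (f' z).det)) := by
    simpa only [Pi.mul_apply, Function.comp_apply, hrestrict] using
      tendsto_setIntegral_mul_det hφc (isClosed_tsupport φ).measurableSet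
      (fun n => hφ.continuous.mul (hd.comp (hG n).continuous)) (hφ.continuous.mul (hd.comp hfc))
      hunif (fun n => memLp_restrict_of_isCompact hφc (isClosed_tsupport φ).measurableSet
        ((hG n).continuous_fderiv (by simp))) (hf' _ hφc) (hG' _ hφc)
  have hvanish : ∀ᶠ n in atTop,
      ∫ z, φ z * fderiv ℝ h (G n z) e * (fderiv ℝ (G n) z).det = 0 := by
    filter_upwards [eventually_fderiv_eq_zero_of_comp_ne_zero hfc hφc hφ₁ hGφ] with n hn
    exact integral_mul_fderiv_comp_mul_det_fderiv_eq_zero (contDiff_infty.1 (hG n) 2) hh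
      (hφ.of_le (by simp)) hφc hn e
  have hcutoff (z : ℂ) : fderiv ℝ h (f z) e = φ z * fderiv ℝ h (f z) e := by
    by_cases hz : f z ∈ tsupport h
    · simp [(hφ₁ z hz).eq_of_nhds]
    · simp [image_eq_zero_of_notMem_tsupport fun hz' => hz (tsupport_fderiv_subset ℝ hz')]
  rw [integral_congr_ae (ae_of_all _ fun z => congrArg (· * (f' z).det) (hcutoff z))]
  exact tendsto_nhds_unique (hlim.congr' hvanish) tendsto_const_nhds

end NullLagrangian

section ZeroDistribDeriv

open scoped ContDiff Manifold

variable {E : Type*} [NormedAddCommGroup E] [NormedSpace ℝ E] [MeasurableSpace E]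

/-- The measure `π` has vanishing distributional derivative: all directional derivatives of
compactly supported smooth functions have integral zero against it. -/
def HasZeroDistribDeriv (π : Measure E) : Prop :=
  ∀ h : E → ℝ, ContDiff ℝ ∞ h → HasCompactSupport h → ∀ e, ∫ y, fderiv ℝ h y e ∂π = 0

variable [BorelSpace E] [FiniteDimensional ℝ E] {π ν : Measure E}
  [IsFiniteMeasureOnCompacts π] [IsFiniteMeasureOnCompacts ν]

theorem measure_isOpen_le_of_forall_integral_contDiff_eq
    (hint : ∀ h : E → ℝ, ContDiff ℝ ∞ h → HasCompactSupport h → ∫ y, h y ∂π = ∫ y, h y ∂ν)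
    {U : Set E} (hU : IsOpen U) : π U ≤ ν U := by
  rw [hU.measure_eq_iSup_isCompact]
  refine iSup₂_le fun K hKU => iSup_le fun hK => ?_
  obtain ⟨r, hKr⟩ := hK.isBounded.subset_ball (0 : E)
  obtain ⟨h, hh, hh01, hsupp, hone⟩ := exists_contMDiff_support_eq_eq_one_iff 𝓘(ℝ, E)
    (hU.inter isOpen_ball) hK.isClosed (subset_inter hKU hKr) (n := ⊤)
  have hc : HasCompactSupport h := by
    refine (isCompact_closedBall (0 : E) r).of_isClosed_subset isClosed_closure ?_
    exact closure_minimal (hsupp.le.trans (inter_subset_right.trans ball_subset_closedBall))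
      isClosed_closedBall
  have h_nonneg (y : E) : 0 ≤ h y := (hh01 (mem_range_self y)).1
  have h_le_one (y : E) : h y ≤ 1 := (hh01 (mem_range_self y)).2
  have hlint (ρ : Measure E) [IsFiniteMeasureOnCompacts ρ] :
      ENNReal.ofReal (∫ y, h y ∂ρ) = ∫⁻ y, ENNReal.ofReal (h y) ∂ρ :=
    ofReal_integral_eq_lintegral_ofReal
      (hh.continuous.integrable_of_hasCompactSupport hc) (ae_of_all _ h_nonneg)
  calc π K = ∫⁻ y in K, ENNReal.ofReal (h y) ∂π := by
        rw [← setLIntegral_one]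
        exact setLIntegral_congr_fun hK.measurableSet fun y hy => by simp [(hone y).1 hy]
    _ ≤ ∫⁻ y, ENNReal.ofReal (h y) ∂π := setLIntegral_le_lintegral _ _
    _ = ∫⁻ y, ENNReal.ofReal (h y) ∂ν := by rw [← hlint, ← hlint, hint h hh.contDiff hc]
    _ ≤ ∫⁻ y, U.indicator 1 y ∂ν := by
        refine lintegral_mono fun y => ?_
        by_cases hy : y ∈ U
        · simpa [hy] using h_le_one y
        · have : h y = 0 := Function.notMem_support.1 fun hy' => hy (hsupp.le hy').1
          simp [this]
    _ = ν U := lintegral_indicator_one hU.measurableSet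

theorem measure_ext_of_forall_integral_contDiff_eq
    (hint : ∀ h : E → ℝ, ContDiff ℝ ∞ h → HasCompactSupport h → ∫ y, h y ∂π = ∫ y, h y ∂ν) :
    π = ν :=
  Measure.OuterRegular.ext_isOpen fun _ hU =>
    (measure_isOpen_le_of_forall_integral_contDiff_eq hint hU).antisymm
      (measure_isOpen_le_of_forall_integral_contDiff_eq (fun h hh hc => (hint h hh hc).symm) hU)

theorem integrable_comp_add_smul_prod {u : E → ℝ} (hu : Continuous u) (huc : HasCompactSupport u)
    (a : E) : Integrable (fun p : ℝ × E => u (p.2 + p.1 • a))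
      ((volume.restrict (uIoc 0 1)).prod π) := by
  let K := (fun p : ℝ × E => p.2 - p.1 • a) '' (Icc 0 1 ×ˢ tsupport u)
  have hK : IsCompact K := (isCompact_Icc.prod huc.isCompact).image (by fun_prop)
  have hint : IntegrableOn (fun p : ℝ × E => u (p.2 + p.1 • a)) (Icc 0 1 ×ˢ K)
      (volume.prod π) :=
    ContinuousOn.integrableOn_compact (isCompact_Icc.prod hK) (by fun_prop)
  have hprod : (volume.restrict (uIoc (0 : ℝ) 1)).prod π =
      (volume.prod π).restrict (uIoc 0 1 ×ˢ univ) := by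
    rw [← Measure.prod_restrict, Measure.restrict_univ]
  rw [hprod]
  refine hint.of_forall_sdiff_eq_zero (measurableSet_uIoc.prod .univ) ?_
  rintro ⟨t, y⟩ ⟨⟨ht, -⟩, hnot⟩
  rw [uIoc_of_le zero_le_one] at ht
  refine image_eq_zero_of_notMem_tsupport fun hy => hnot ⟨Ioc_subset_Icc_self ht, ?_⟩
  exact ⟨(t, y + t • a), ⟨Ioc_subset_Icc_self ht, hy⟩, add_sub_cancel_right _ _⟩

theorem HasZeroDistribDeriv.integral_comp_add_right (hπ : HasZeroDistribDeriv π) {h : E → ℝ}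
    (hh : ContDiff ℝ ∞ h) (hc : HasCompactSupport h) (a : E) :
    ∫ y, h (y + a) ∂π = ∫ y, h y ∂π := by
  have htr {u : E → ℝ} (hu : HasCompactSupport u) (b : E) :
      HasCompactSupport fun y => u (y + b) := hu.comp_homeomorph (Homeomorph.addRight b)
  have hderiv (y : E) (t : ℝ) :
      HasDerivAt (fun s : ℝ => h (y + s • a)) (fderiv ℝ h (y + t • a) a) t := by
    have hline : HasDerivAt (fun s : ℝ => y + s • a) a t := by
      simpa using ((hasDerivAt_id t).smul_const a).const_add y
    exact ((hh.differentiable (by simp)) _).hasFDerivAt.comp_hasDerivAt t hline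
  have hcont : Continuous fun w => fderiv ℝ h w a :=
    (hh.continuous_fderiv (by simp)).clm_apply continuous_const
  have hFTC (y : E) : ∫ t in (0 : ℝ)..1, fderiv ℝ h (y + t • a) a = h (y + a) - h y := by
    simpa using intervalIntegral.integral_eq_sub_of_hasDerivAt (fun t _ => hderiv y t)
      ((hcont.comp (by fun_prop : Continuous fun t : ℝ => y + t • a)).intervalIntegrable 0 1)
  have hzero (t : ℝ) : ∫ y, fderiv ℝ h (y + t • a) a ∂π = 0 := by
    simpa only [fderiv_comp_add_right] using
      hπ (fun y => h (y + t • a)) (by fun_prop) (htr hc _) a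
  have hswap := intervalIntegral_integral_swap (f := fun t y => fderiv ℝ h (y + t • a) a)
    (integrable_comp_add_smul_prod (π := π) hcont (hc.fderiv_apply (𝕜 := ℝ) a) a)
  simp only [hzero, hFTC, intervalIntegral.integral_zero] at hswap
  rw [integral_sub _ (hh.continuous.integrable_of_hasCompactSupport hc)] at hswap
  · linarith
  · exact (by fun_prop : Continuous fun y => h (y + a)).integrable_of_hasCompactSupport (htr hc a)

theorem HasZeroDistribDeriv.exists_eq_smul (hπ : HasZeroDistribDeriv π) (μ : Measure E)
    [μ.IsAddHaarMeasure] : ∃ c : ℝ≥0, π = c • μ := by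
  have : π.IsAddLeftInvariant := by
    refine ⟨fun a => ?_⟩
    have : IsFiniteMeasureOnCompacts (π.map (a + ·)) :=
      Measure.IsFiniteMeasureOnCompacts.map π (Homeomorph.addLeft a)
    refine measure_ext_of_forall_integral_contDiff_eq fun h hh hc => ?_
    rw [(measurableEmbedding_addLeft a).integral_map]
    simpa [add_comm] using hπ.integral_comp_add_right hh hc a
  exact ⟨_, Measure.isAddLeftInvariant_eq_smul π μ⟩

end ZeroDistribDeriv

section AnalyticQuasiconformal

attribute [local instance] Complex.finrank_real_complex_fact

/-- The complex derivative `∂A` in the decomposition `A z = ∂A * z + ∂̄A * conj z` of a real linear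
map. -/
noncomputable def wirtingerD (A : ℂ →L[ℝ] ℂ) : ℂ := (A 1 - I * A I) / 2

/-- The conjugate derivative `∂̄A` in the decomposition `A z = ∂A * z + ∂̄A * conj z` of a real
linear map. -/
noncomputable def wirtingerDbar (A : ℂ →L[ℝ] ℂ) : ℂ := (A 1 + I * A I) / 2

theorem apply_eq_wirtinger (A : ℂ →L[ℝ] ℂ) (z : ℂ) :
    A z = wirtingerD A * z + wirtingerDbar A * (starRingEnd ℂ) z := by
  have hconj : (starRingEnd ℂ) z = z.re - z.im * I := by
    apply Complex.ext <;> simp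
  rw [clm_apply_eq_re_smul_add_im_smul A z, real_smul, real_smul, hconj, wirtingerD, wirtingerDbar]
  linear_combination z.im * A I * I_sq + (A 1 - I * A I) / 2 * re_add_im z

theorem norm_le_norm_wirtinger (A : ℂ →L[ℝ] ℂ) : ‖A‖ ≤ ‖wirtingerD A‖ + ‖wirtingerDbar A‖ := by
  refine A.opNorm_le_bound (by positivity) fun z => ?_
  calc ‖A z‖ ≤ ‖wirtingerD A * z‖ + ‖wirtingerDbar A * (starRingEnd ℂ) z‖ :=
        apply_eq_wirtinger A z ▸ norm_add_le _ _
    _ = (‖wirtingerD A‖ + ‖wirtingerDbar A‖) * ‖z‖ := by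
        rw [norm_mul, norm_mul, norm_conj, add_mul]

theorem det_eq_norm_wirtinger (A : ℂ →L[ℝ] ℂ) :
    A.det = ‖wirtingerD A‖ ^ 2 - ‖wirtingerDbar A‖ ^ 2 := by
  simp only [det_eq_areaForm, areaForm'_eq_re_mul_im_sub, wirtingerD, wirtingerDbar,
    norm_div, div_pow, Complex.sq_norm, normSq_apply, add_re, add_im, sub_re, sub_im,
    mul_re, mul_im, I_re, I_im, re_ofNat, im_ofNat]
  ring

theorem norm_sq_le_mul_det {A : ℂ →L[ℝ] ℂ} {k : ℝ} (hk₀ : 0 ≤ k) (hk₁ : k < 1)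
    (hA : ‖wirtingerDbar A‖ ≤ k * ‖wirtingerD A‖) : ‖A‖ ^ 2 ≤ (1 + k) / (1 - k) * A.det := by
  have hpos : 0 < 1 - k := sub_pos.2 hk₁
  calc ‖A‖ ^ 2 ≤ ((1 + k) * ‖wirtingerD A‖) ^ 2 := by
        gcongr
        linarith [norm_le_norm_wirtinger A]
    _ = (1 + k) / (1 - k) * (‖wirtingerD A‖ ^ 2 - (k * ‖wirtingerD A‖) ^ 2) := by
        field_simp
        ring
    _ ≤ (1 + k) / (1 - k) * A.det := by
        rw [det_eq_norm_wirtinger]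
        gcongr

/-- Analytic `K`-quasiconformality of a homeomorphism `f` with generalized derivative `f'`:
`f'` is locally square integrable and has distortion at most `K` almost everywhere. -/
structure IsAnalyticQC (f : ℂ ≃ₜ ℂ) (f' : ℂ → ℂ →L[ℝ] ℂ) (K : ℝ) : Prop where
  isWeakFDeriv : IsWeakFDeriv f f' volume
  memLp_restrict : ∀ S, IsCompact S → MemLp f' 2 (volume.restrict S)
  pos : 0 < K
  norm_sq_le : ∀ᵐ z, ‖f' z‖ ^ 2 ≤ K * (f' z).det

/-- The real linear map with partial derivatives `a` in the direction `1` and `b` in the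
direction `I`. -/
noncomputable def ofPartials (a b : ℂ) : ℂ →L[ℝ] ℂ :=
  reCLM.smulRight a + imCLM.smulRight b

theorem ofPartials_apply (a b z : ℂ) : ofPartials a b z = z.re * a + z.im * b := by
  simp [ofPartials]

theorem memLp_ofPartials {α : Type*} [MeasurableSpace α] {μ : Measure α} {p : ℝ≥0∞}
    {g₁ g₂ : α → ℂ} (hg₁ : MemLp g₁ p μ) (hg₂ : MemLp g₂ p μ) :
    MemLp (fun z => ofPartials (g₁ z) (g₂ z)) p μ :=
  ((ContinuousLinearMap.smulRightL ℝ ℂ ℂ reCLM).comp_memLp' hg₁).add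
    ((ContinuousLinearMap.smulRightL ℝ ℂ ℂ imCLM).comp_memLp' hg₂)

theorem HasWeakPartialsOn.isWeakFDeriv {f g₁ g₂ : ℂ → ℂ} (h : HasWeakPartialsOn f g₁ g₂ univ) :
    IsWeakFDeriv f (fun z => ofPartials (g₁ z) (g₂ z)) volume := by
  obtain ⟨hf, hg₁, hg₂, hweak⟩ := h
  rw [locallyIntegrableOn_univ] at hf hg₁ hg₂
  refine ⟨hf, ?_, fun φ hφ hφc v => ?_⟩
  · simp only [locallyIntegrable_iff, IntegrableOn, ← memLp_one_iff_integrable] at hg₁ hg₂ ⊢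
    exact fun S hS => memLp_ofPartials (hg₁ S hS) (hg₂ S hS)
  · obtain ⟨hre, him⟩ := hweak φ hφ hφc (subset_univ _)
    simp only [Measure.restrict_univ] at hre him
    have hφ' := hφ.continuous_fderiv (by simp)
    have hcut {g : ℂ → ℂ} {u : ℂ → ℝ} (hg : LocallyIntegrable g) (hu : Continuous u)
        (huc : HasCompactSupport u) : Integrable fun z => g z * (u z : ℂ) := by
      simpa [mul_comm] using hg.integrable_smul_left_of_hasCompactSupport hu huc
    have hcut_deriv (e : ℂ) : Integrable fun z => f z * (fderiv ℝ φ z e : ℂ) :=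
      hcut hf (hφ'.clm_apply continuous_const) (hφc.fderiv_apply (𝕜 := ℝ) e)
    have hcut_self {g : ℂ → ℂ} (hg : LocallyIntegrable g) : Integrable fun z => g z * (φ z : ℂ) :=
      hcut hg hφ.continuous hφc
    calc ∫ z, fderiv ℝ φ z v • f z
        = ∫ z, (v.re * (f z * (fderiv ℝ φ z 1 : ℂ)) + v.im * (f z * (fderiv ℝ φ z I : ℂ))) := by
          congr! 2 with z
          rw [clm_apply_eq_re_smul_add_im_smul (fderiv ℝ φ z) v, real_smul]
          push_cast [smul_eq_mul]
          ring
      _ = -(v.re * ∫ z, g₁ z * (φ z : ℂ)) + -(v.im * ∫ z, g₂ z * (φ z : ℂ)) := by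
          rw [integral_add ((hcut_deriv 1).const_mul _) ((hcut_deriv I).const_mul _),
            integral_const_mul, integral_const_mul, hre, him, mul_neg, mul_neg]
      _ = -∫ z, φ z • ofPartials (g₁ z) (g₂ z) v := by
          rw [← neg_add, ← integral_const_mul, ← integral_const_mul,
            ← integral_add ((hcut_self hg₁).const_mul _) ((hcut_self hg₂).const_mul _)]
          congr! 3 with z
          rw [ofPartials_apply, real_smul]
          ring

theorem IsQCOfPlane.exists_isAnalyticQC {f : ℂ → ℂ} (hf : IsQCOfPlane f) :
    ∃ (F : ℂ ≃ₜ ℂ) (F' : ℂ → ℂ →L[ℝ] ℂ) (K : ℝ), F = f ∧ IsAnalyticQC F F' K := by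
  obtain ⟨⟨F, rfl⟩, g₁, g₂, hweak, hsq, μ, -, ⟨k, hk₁, hμ⟩, hbeltrami⟩ := hf
  have hk₀ : 0 ≤ k := let ⟨z, hz⟩ := hμ.exists; (norm_nonneg _).trans hz
  refine ⟨F, _, (1 + k) / (1 - k), rfl, hweak.isWeakFDeriv, fun S hS => ?_, ?_, ?_⟩
  · have hL2 {g : ℂ → ℂ} (hg : LocallyIntegrableOn g univ volume)
        (hgS : IntegrableOn (fun z => ‖g z‖ ^ 2) S volume) : MemLp g 2 (volume.restrict S) :=
      (memLp_two_iff_integrable_sq_norm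
        ((locallyIntegrableOn_univ.1 hg).aestronglyMeasurable (μ := volume)).restrict).2 hgS
    exact memLp_ofPartials (hL2 hweak.2.1 (hsq S hS).1) (hL2 hweak.2.2.1 (hsq S hS).2)
  · exact div_pos (by linarith) (by linarith)
  · filter_upwards [hμ, hbeltrami] with z hμz hz
    refine norm_sq_le_mul_det hk₀ hk₁ ?_
    have hD : wirtingerD (ofPartials (g₁ z) (g₂ z)) = (g₁ z - I * g₂ z) / 2 := by
      simp [wirtingerD, ofPartials_apply]
    have hDbar : wirtingerDbar (ofPartials (g₁ z) (g₂ z)) = (g₁ z + I * g₂ z) / 2 := by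
      simp [wirtingerDbar, ofPartials_apply]
    rw [hD, hDbar, hz, norm_mul]
    gcongr

namespace IsAnalyticQC

variable {f : ℂ ≃ₜ ℂ} {f' : ℂ → ℂ →L[ℝ] ℂ} {K : ℝ}

theorem ae_det_nonneg (h : IsAnalyticQC f f' K) : ∀ᵐ z, 0 ≤ (f' z).det := by
  filter_upwards [h.norm_sq_le] with z hz
  exact nonneg_of_mul_nonneg_right ((sq_nonneg _).trans hz) h.pos

theorem aemeasurable_det (h : IsAnalyticQC f f' K) : AEMeasurable fun z => (f' z).det :=
  (ContinuousLinearMap.continuous_det.comp_aestronglyMeasurable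
    h.isWeakFDeriv.locallyIntegrable_deriv.aestronglyMeasurable).aemeasurable

theorem isFiniteMeasureOnCompacts_withDensity_det (h : IsAnalyticQC f f' K) :
    IsFiniteMeasureOnCompacts (volume.withDensity fun z => ENNReal.ofReal (f' z).det) := by
  refine ⟨fun S hS => ?_⟩
  rw [withDensity_apply _ hS.measurableSet]
  exact (integrable_det (h.memLp_restrict S hS)).lintegral_lt_top

theorem hasZeroDistribDeriv_map (h : IsAnalyticQC f f' K) :
    HasZeroDistribDeriv ((volume.withDensity fun z => ENNReal.ofReal (f' z).det).map f) := by
  intro u hu huc e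
  rw [f.measurableEmbedding.integral_map, integral_withDensity_eq_integral_toReal_smul₀
    h.aemeasurable_det.ennreal_ofReal (ae_of_all _ fun _ => ENNReal.ofReal_lt_top)]
  rw [← h.isWeakFDeriv.integral_fderiv_comp_mul_det_eq_zero f.continuous h.memLp_restrict
    (hu.of_le (by simp)) huc (f.isCompact_preimage.2 huc) e]
  refine integral_congr_ae ?_
  filter_upwards [h.ae_det_nonneg] with z hz
  rw [ENNReal.toReal_ofReal hz, smul_eq_mul, mul_comm]

theorem exists_setLIntegral_enorm_sq_le (h : IsAnalyticQC f f' K) :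
    ∃ C : ℝ≥0, ∀ B, MeasurableSet B → ∫⁻ z in f ⁻¹' B, ‖f' z‖ₑ ^ 2 ≤ C * volume B := by
  have := h.isFiniteMeasureOnCompacts_withDensity_det
  have := Measure.IsFiniteMeasureOnCompacts.map
    (volume.withDensity fun z => ENNReal.ofReal (f' z).det) f
  obtain ⟨c, hc⟩ := h.hasZeroDistribDeriv_map.exists_eq_smul volume
  refine ⟨K.toNNReal * c, fun B hB => ?_⟩
  calc ∫⁻ z in f ⁻¹' B, ‖f' z‖ₑ ^ 2
      ≤ ∫⁻ z in f ⁻¹' B, ENNReal.ofReal K * ENNReal.ofReal (f' z).det := by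
        refine lintegral_mono_ae (ae_restrict_of_ae ?_)
        filter_upwards [h.norm_sq_le] with z hz
        rw [← ENNReal.ofReal_mul h.pos.le, ← ofReal_norm, ← ENNReal.ofReal_pow (norm_nonneg _)]
        exact ENNReal.ofReal_le_ofReal hz
    _ = ENNReal.ofReal K *
          (volume.withDensity fun z => ENNReal.ofReal (f' z).det).map f B := by
        rw [lintegral_const_mul' _ _ ENNReal.ofReal_ne_top, f.measurableEmbedding.map_apply,
          withDensity_apply _ (f.measurable hB)]
    _ = (K.toNNReal * c : ℝ≥0) * volume B := by
        rw [hc, Measure.smul_apply, ENNReal.coe_mul, mul_assoc]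
        rfl

end IsAnalyticQC

end AnalyticQuasiconformal

section LengthArea

open scoped Real

theorem exists_circleMap_eq_of_mem_sphere {x a : ℂ} {r : ℝ} (ha : a ∈ sphere x r) :
    ∃ t ∈ Icc (-π) π, circleMap x r t = a := by
  refine ⟨arg (a - x), ⟨(arg_mem_Ioc _).1.le, (arg_mem_Ioc _).2⟩, ?_⟩
  rw [circleMap, ← mem_sphere_iff_norm.1 ha, norm_mul_exp_arg_mul_I, add_sub_cancel]

theorem lintegral_ball_eq_lintegral_circleMap {u : ℂ → ℝ≥0∞} (hu : Measurable u) (x : ℂ) {R : ℝ} :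
    ∫⁻ z in ball x R, u z =
      ∫⁻ r in Ioo 0 R, ENNReal.ofReal r * ∫⁻ t in Ioo (-π) π, u (circleMap x r t) := by
  let v := (ball x R).indicator u
  have hv : Measurable v := hu.indicator measurableSet_ball
  have hmeas : Measurable fun p : ℝ × ℝ => ENNReal.ofReal p.1 * v (circleMap x p.1 p.2) := by
    have : Continuous fun p : ℝ × ℝ => circleMap x p.1 p.2 := by
      unfold circleMap
      fun_prop
    exact (ENNReal.measurable_ofReal.comp measurable_fst).mul (hv.comp this.measurable)
  have hinner {r : ℝ} (hr : 0 < r) (t : ℝ) :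
      v (circleMap x r t) = (Iio R).indicator (fun r => u (circleMap x r t)) r := by
    have hmem : circleMap x r t ∈ ball x R ↔ r ∈ Iio R := by
      rw [mem_ball, dist_eq_norm, circleMap_sub_center, norm_circleMap_zero, abs_of_pos hr, mem_Iio]
    by_cases hrR : r ∈ Iio R
    · rw [indicator_of_mem hrR]
      exact indicator_of_mem (hmem.2 hrR) u
    · rw [indicator_of_notMem hrR]
      exact indicator_of_notMem (hmem.not.2 hrR) u
  calc ∫⁻ z in ball x R, u z = ∫⁻ z, v (x + z) := by
        rw [lintegral_add_left_eq_self, lintegral_indicator measurableSet_ball]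
    _ = ∫⁻ r in Ioi (0 : ℝ), ∫⁻ t in Ioo (-π) π, ENNReal.ofReal r * v (circleMap x r t) := by
        rw [← Complex.lintegral_comp_polarCoord_symm, _root_.polarCoord_target,
          Measure.volume_eq_prod, ← Measure.prod_restrict, ← lintegral_prod _ hmeas.aemeasurable]
        congr! 2
        rw [smul_eq_mul, Complex.polarCoord_symm_apply, circleMap, Complex.exp_mul_I]
        push_cast
        rfl
    _ = ∫⁻ r in Ioi (0 : ℝ), (Iio R).indicator
          (fun r => ENNReal.ofReal r * ∫⁻ t in Ioo (-π) π, u (circleMap x r t)) r := by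
        refine setLIntegral_congr_fun measurableSet_Ioi fun r hr => ?_
        simp only [hinner hr, lintegral_const_mul' _ _ ENNReal.ofReal_ne_top]
        by_cases hrR : r ∈ Iio R <;> simp [hrR]
    _ = _ := by
        rw [setLIntegral_indicator measurableSet_Iio, Iio_inter_Ioi]

theorem lintegral_ofReal_inv_eq_ofReal_log {r₁ r₂ : ℝ} (h₁ : 0 < r₁) (h₁₂ : r₁ ≤ r₂) :
    ∫⁻ r in Ioo r₁ r₂, ENNReal.ofReal r⁻¹ = ENNReal.ofReal (Real.log (r₂ / r₁)) := by
  have hint : IntervalIntegrable (fun r : ℝ => r⁻¹) volume r₁ r₂ :=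
    intervalIntegral.intervalIntegrable_inv (fun r hr => ((lt_min h₁ (h₁.trans_le h₁₂)).trans_le
      hr.1).ne') continuousOn_id
  rw [← integral_inv_of_pos h₁ (h₁.trans_le h₁₂), intervalIntegral.integral_of_le h₁₂,
    restrict_Ioo_eq_restrict_Ioc, ofReal_integral_eq_lintegral_ofReal
      ((intervalIntegrable_iff_integrableOn_Ioc_of_le h₁₂).1 hint)]
  filter_upwards [ae_restrict_mem measurableSet_Ioc] with r hr
  exact inv_nonneg.2 (h₁.trans hr.1).le

theorem sq_lintegral_le_measure_univ_mul_lintegral_sq {α : Type*} [MeasurableSpace α]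
    (μ : Measure α) {u : α → ℝ≥0∞} (hu : AEMeasurable u μ) :
    (∫⁻ t, u t ∂μ) ^ 2 ≤ μ univ * ∫⁻ t, u t ^ 2 ∂μ := by
  have h := pow_le_pow_left₀ zero_le (ENNReal.lintegral_mul_le_Lp_mul_Lq μ
    Real.HolderConjugate.two_two (aemeasurable_const (b := (1 : ℝ≥0∞))) hu) 2
  rw [mul_pow, ← ENNReal.rpow_mul_natCast, ← ENNReal.rpow_mul_natCast] at h
  simpa using h

theorem lintegral_enorm_sq_eq_eLpNorm_two_sq {α F : Type*} [MeasurableSpace α]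
    [NormedAddCommGroup F] (u : α → F) (μ : Measure α) :
    ∫⁻ z, ‖u z‖ₑ ^ 2 ∂μ = eLpNorm u 2 μ ^ 2 := by
  simpa using (eLpNorm_nnreal_pow_eq_lintegral (f := u) (p := 2) (μ := μ) two_ne_zero).symm

variable {E : Type*} [NormedAddCommGroup E] [NormedSpace ℝ E] [CompleteSpace E]

theorem enorm_sub_le_lintegral_enorm_fderiv_circleMap {G : ℂ → E} (hG : ContDiff ℝ 1 G) {x : ℂ}
    {r : ℝ} (hr : 0 ≤ r) {a b : ℂ} (ha : a ∈ sphere x r) (hb : b ∈ sphere x r) :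
    ‖G a - G b‖ₑ ≤
      ENNReal.ofReal r * ∫⁻ t in Ioo (-π) π, ‖fderiv ℝ G (circleMap x r t)‖ₑ := by
  obtain ⟨s, hs, rfl⟩ := exists_circleMap_eq_of_mem_sphere ha
  obtain ⟨t, ht, rfl⟩ := exists_circleMap_eq_of_mem_sphere hb
  let w (u : ℝ) : E := fderiv ℝ G (circleMap x r u) (circleMap 0 r u * I)
  have hderiv (u : ℝ) : HasDerivAt (fun u => G (circleMap x r u)) (w u) u :=
    (hG.differentiable (by simp) _).hasFDerivAt.comp_hasDerivAt u (hasDerivAt_circleMap x r u)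
  have hcont : Continuous w :=
    ((hG.continuous_fderiv (by simp)).comp (continuous_circleMap x r)).clm_apply
      ((continuous_circleMap 0 r).mul continuous_const)
  have hspeed (u : ℝ) : ‖w u‖ₑ ≤ ENNReal.ofReal r * ‖fderiv ℝ G (circleMap x r u)‖ₑ := by
    rw [mul_comm, ← Real.enorm_of_nonneg hr]
    simpa [← enorm_norm (circleMap 0 r u * I), abs_of_nonneg hr] using
      (fderiv ℝ G (circleMap x r u)).le_opENorm (circleMap 0 r u * I)
  calc ‖G (circleMap x r s) - G (circleMap x r t)‖ₑ = ‖∫ u in uIoc t s, w u‖ₑ := by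
        rw [← intervalIntegral.integral_eq_sub_of_hasDerivAt (fun u _ => hderiv u)
          (hcont.intervalIntegrable t s), ← enorm_norm,
          intervalIntegral.norm_intervalIntegral_eq, enorm_norm]
    _ ≤ ∫⁻ u in uIoc t s, ‖w u‖ₑ := enorm_integral_le_lintegral_enorm _
    _ ≤ ∫⁻ u in Ioc (-π) π, ‖w u‖ₑ :=
        lintegral_mono_set (Ioc_subset_Ioc (le_min ht.1 hs.1) (max_le ht.2 hs.2))
    _ ≤ ∫⁻ u in Ioo (-π) π, ENNReal.ofReal r * ‖fderiv ℝ G (circleMap x r u)‖ₑ := by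
        rw [restrict_Ioo_eq_restrict_Ioc]
        exact lintegral_mono hspeed
    _ = _ := lintegral_const_mul' _ _ ENNReal.ofReal_ne_top

theorem ofReal_sq_mul_inv_le_lintegral_circleMap {G : ℂ → E} (hG : ContDiff ℝ 1 G) {x : ℂ}
    {r c : ℝ} (hr : 0 < r) (hc : 0 ≤ c)
    (hosc : ∃ a ∈ sphere x r, ∃ b ∈ sphere x r, c ≤ ‖G a - G b‖) :
    ENNReal.ofReal (c ^ 2) * ENNReal.ofReal r⁻¹ ≤ ENNReal.ofReal (2 * π) *
      (ENNReal.ofReal r * ∫⁻ t in Ioo (-π) π, ‖fderiv ℝ G (circleMap x r t)‖ₑ ^ 2) := by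
  obtain ⟨a, ha, b, hb, hab⟩ := hosc
  have hcont : Continuous fun t => ‖fderiv ℝ G (circleMap x r t)‖ₑ :=
    ((hG.continuous_fderiv (by simp)).comp (continuous_circleMap x r)).enorm
  have hCS := sq_lintegral_le_measure_univ_mul_lintegral_sq (volume.restrict (Ioo (-π) π))
    hcont.aemeasurable
  rw [Measure.restrict_apply_univ, Real.volume_Ioo, sub_neg_eq_add, ← two_mul] at hCS
  have hosc' : ENNReal.ofReal c ≤
      ENNReal.ofReal r * ∫⁻ t in Ioo (-π) π, ‖fderiv ℝ G (circleMap x r t)‖ₑ :=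
    calc ENNReal.ofReal c ≤ ‖G a - G b‖ₑ := by
          rw [← ofReal_norm]
          exact ENNReal.ofReal_le_ofReal hab
      _ ≤ _ := enorm_sub_le_lintegral_enorm_fderiv_circleMap hG hr.le ha hb
  calc ENNReal.ofReal (c ^ 2) * ENNReal.ofReal r⁻¹
      ≤ (ENNReal.ofReal r * ∫⁻ t in Ioo (-π) π, ‖fderiv ℝ G (circleMap x r t)‖ₑ) ^ 2 *
          ENNReal.ofReal r⁻¹ := by
        rw [ENNReal.ofReal_pow hc]
        gcongr
    _ ≤ (ENNReal.ofReal r ^ 2 * (ENNReal.ofReal (2 * π) *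
          ∫⁻ t in Ioo (-π) π, ‖fderiv ℝ G (circleMap x r t)‖ₑ ^ 2)) * ENNReal.ofReal r⁻¹ := by
        rw [mul_pow]
        gcongr
    _ = (ENNReal.ofReal r * ENNReal.ofReal r⁻¹) * (ENNReal.ofReal (2 * π) * (ENNReal.ofReal r *
          ∫⁻ t in Ioo (-π) π, ‖fderiv ℝ G (circleMap x r t)‖ₑ ^ 2)) := by ring
    _ = _ := by
        rw [← ENNReal.ofReal_mul hr.le, mul_inv_cancel₀ hr.ne', ENNReal.ofReal_one, one_mul]

theorem ofReal_sq_mul_log_le_lintegral_fderiv {G : ℂ → E} (hG : ContDiff ℝ 1 G) {x : ℂ}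
    {r₁ r₂ c : ℝ} (h₁ : 0 < r₁) (h₁₂ : r₁ ≤ r₂) (hc : 0 ≤ c)
    (hosc : ∀ r ∈ Ioo r₁ r₂, ∃ a ∈ sphere x r, ∃ b ∈ sphere x r, c ≤ ‖G a - G b‖) :
    ENNReal.ofReal (c ^ 2 * Real.log (r₂ / r₁)) ≤
      ENNReal.ofReal (2 * π) * ∫⁻ z in ball x r₂, ‖fderiv ℝ G z‖ₑ ^ 2 := by
  rw [ENNReal.ofReal_mul (sq_nonneg c), ← lintegral_ofReal_inv_eq_ofReal_log h₁ h₁₂,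
    ← lintegral_const_mul' _ _ ENNReal.ofReal_ne_top, lintegral_ball_eq_lintegral_circleMap
      ((hG.continuous_fderiv (by simp)).enorm.measurable.pow_const 2),
    ← lintegral_const_mul' _ _ ENNReal.ofReal_ne_top]
  exact (setLIntegral_mono' measurableSet_Ioo fun r hr =>
    ofReal_sq_mul_inv_le_lintegral_circleMap hG (h₁.trans hr.1) hc (hosc r hr)).trans
      (lintegral_mono_set (Ioo_subset_Ioo_left h₁.le))

theorem eventually_forall_le_norm_sub {X F ι : Type*} [NormedAddCommGroup F] {G : ι → X → F}
    {g : X → F} {l : Filter ι} {S : Set X} (hG : TendstoUniformlyOn G g l S) {c' c : ℝ}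
    (hc : c' < c) :
    ∀ᶠ i in l, ∀ a ∈ S, ∀ b ∈ S, c ≤ ‖g a - g b‖ → c' ≤ ‖G i a - G i b‖ := by
  filter_upwards [Metric.tendstoUniformlyOn_iff.1 hG ((c - c') / 2) (by linarith)]
    with i hi a ha b hb hab
  have hdist := dist_triangle4_right (g a) (g b) (G i a) (G i b)
  rw [← dist_eq_norm] at hab ⊢
  linarith [hi a ha, hi b hb]

theorem ofReal_sq_mul_log_le_lintegral_of_tendsto {G : ℕ → ℂ → E} {g : ℂ → E}
    {g' : ℂ → ℂ →L[ℝ] E} {x : ℂ} {r₁ r₂ c : ℝ} (hG : ∀ n, ContDiff ℝ 1 (G n))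
    (hg : TendstoUniformlyOn G g atTop (closedBall x r₂))
    (hg'm : AEStronglyMeasurable g' (volume.restrict (closedBall x r₂)))
    (hg' : Tendsto (fun n => eLpNorm (fderiv ℝ (G n) - g') 2 (volume.restrict (closedBall x r₂)))
      atTop (𝓝 0))
    (h₁ : 0 < r₁) (h₁₂ : r₁ ≤ r₂) (hc : 0 < c)
    (hosc : ∀ r ∈ Ioo r₁ r₂, ∃ a ∈ sphere x r, ∃ b ∈ sphere x r, c ≤ ‖g a - g b‖) :
    ENNReal.ofReal (c ^ 2 * Real.log (r₂ / r₁)) ≤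
      ENNReal.ofReal (2 * π) * ∫⁻ z in closedBall x r₂, ‖g' z‖ₑ ^ 2 := by
  have hleft : Tendsto (fun c' : ℝ => ENNReal.ofReal (c' ^ 2 * Real.log (r₂ / r₁))) (𝓝[<] c)
      (𝓝 (ENNReal.ofReal (c ^ 2 * Real.log (r₂ / r₁)))) :=
    (ENNReal.continuous_ofReal.comp ((continuous_pow 2).mul_const _)).continuousWithinAt
  have hright : Tendsto (fun n => ENNReal.ofReal (2 * π) *
      (eLpNorm (fderiv ℝ (G n) - g') 2 (volume.restrict (closedBall x r₂)) +
        eLpNorm g' 2 (volume.restrict (closedBall x r₂))) ^ 2) atTop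
      (𝓝 (ENNReal.ofReal (2 * π) * ∫⁻ z in closedBall x r₂, ‖g' z‖ₑ ^ 2)) := by
    rw [lintegral_enorm_sq_eq_eLpNorm_two_sq]
    refine ENNReal.Tendsto.const_mul ?_ (Or.inr ENNReal.ofReal_ne_top)
    simpa using ENNReal.Tendsto.pow (n := 2) (hg'.add tendsto_const_nhds)
  refine le_of_tendsto hleft ?_
  filter_upwards [Ioo_mem_nhdsLT hc] with c' hc'
  refine ge_of_tendsto hright ?_
  filter_upwards [eventually_forall_le_norm_sub hg hc'.2] with n hn
  have hsphere {r : ℝ} (hr : r ∈ Ioo r₁ r₂) : sphere x r ⊆ closedBall x r₂ :=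
    sphere_subset_closedBall.trans (closedBall_subset_closedBall hr.2.le)
  have hbound := ofReal_sq_mul_log_le_lintegral_fderiv (hG n) h₁ h₁₂ hc'.1.le fun r hr => by
    obtain ⟨a, ha, b, hb, hab⟩ := hosc r hr
    exact ⟨a, ha, b, hb, hn a (hsphere hr ha) b (hsphere hr hb) hab⟩
  refine hbound.trans ?_
  gcongr
  refine (lintegral_mono_set ball_subset_closedBall).trans ?_
  rw [lintegral_enorm_sq_eq_eLpNorm_two_sq]
  gcongr
  simpa using eLpNorm_add_le
      (((hG n).continuous_fderiv (by simp)).aestronglyMeasurable.sub hg'm) hg'm one_le_two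

theorem tendstoLocallyUniformly_comp_left {X Y Z ι : Type*} [TopologicalSpace X]
    [WeaklyLocallyCompactSpace X] [UniformSpace Y] [UniformSpace Z] {F : ι → X → Y} {f : X → Y}
    {l : Filter ι} (hF : ∀ i, Continuous (F i)) (hf : Continuous f) {u : Y → Z} (hu : Continuous u)
    (h : TendstoLocallyUniformly F f l) :
    TendstoLocallyUniformly (fun i x => u (F i x)) (fun x => u (f x)) l := by
  have hC : Tendsto (fun i => (⟨F i, hF i⟩ : C(X, Y))) l (𝓝 ⟨f, hf⟩) :=
    ContinuousMap.tendsto_iff_tendstoLocallyUniformly.2 h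
  exact ContinuousMap.tendsto_iff_tendstoLocallyUniformly.1
    (((ContinuousMap.continuous_postcomp ⟨u, hu⟩).tendsto _).comp hC)

theorem IsWeakFDeriv.ofReal_sq_mul_log_le_lintegral_comp {f : ℂ → ℂ} {f' : ℂ → ℂ →L[ℝ] ℂ}
    (hf : IsWeakFDeriv f f' volume) (hfc : Continuous f)
    (hf' : ∀ S, IsCompact S → MemLp f' 2 (volume.restrict S)) {T : ℂ → E} (hT : ContDiff ℝ 1 T)
    {x : ℂ} {r₁ r₂ c : ℝ} (h₁ : 0 < r₁) (h₁₂ : r₁ ≤ r₂) (hc : 0 < c)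
    (hosc : ∀ r ∈ Ioo r₁ r₂, ∃ a ∈ sphere x r, ∃ b ∈ sphere x r, c ≤ ‖T (f a) - T (f b)‖) :
    ENNReal.ofReal (c ^ 2 * Real.log (r₂ / r₁)) ≤
      ENNReal.ofReal (2 * π) * ∫⁻ z in closedBall x r₂, ‖(fderiv ℝ T (f z)).comp (f' z)‖ₑ ^ 2 := by
  obtain ⟨G, hG, hGf, hG'⟩ := hf.exists_smooth_approx hfc one_le_two (by simp) hf'
  have hT' : Continuous (fderiv ℝ T) := hT.continuous_fderiv (by simp)
  have hcomp (n : ℕ) : fderiv ℝ (fun z => T (G n z)) =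
      fun z => (fderiv ℝ T (G n z)).comp (fderiv ℝ (G n) z) := by
    ext1 z
    exact fderiv_comp z (hT.differentiable (by simp) _) ((hG n).differentiable (by simp) z)
  have hK := isCompact_closedBall x r₂
  have hunif {Y : Type _} [UniformSpace Y] {u : ℂ → Y} (hu : Continuous u) :
      TendstoUniformlyOn (fun n z => u (G n z)) (fun z => u (f z)) atTop (closedBall x r₂) :=
    (tendstoLocallyUniformlyOn_iff_tendstoUniformlyOn_of_compact hK).1
      (tendstoLocallyUniformly_comp_left (fun n => (hG n).continuous) hfc hu
        hGf).tendstoLocallyUniformlyOn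
  have hmeas (n : ℕ) := ((hG n).continuous_fderiv (by simp)).aestronglyMeasurable
    (μ := volume.restrict (closedBall x r₂))
  have hL2 := tendsto_eLpNorm_bilin_sub (ContinuousLinearMap.compL ℝ ℂ ℂ E) one_le_two
    (fun n => (hT'.comp (hG n).continuous).aestronglyMeasurable) hmeas
    (memLp_restrict_of_isCompact (p := ⊤) hK hK.measurableSet (hT'.comp hfc)) (hf' _ hK)
    (tendsto_eLpNorm_top_restrict_sub hK.measurableSet (hunif hT')) (hG' _ hK)
  refine ofReal_sq_mul_log_le_lintegral_of_tendsto
    (fun n => hT.comp ((hG n).of_le (by simp))) (hunif hT.continuous)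
    ((ContinuousLinearMap.compL ℝ ℂ ℂ E).aestronglyMeasurable_comp₂
      (hT'.comp hfc).aestronglyMeasurable (hf' _ hK).1) ?_ h₁ h₁₂ hc hosc
  exact hL2.congr fun n => congrArg (fun u => eLpNorm (u - _) 2 _) (hcomp n).symm

end LengthArea

section SphereCrossing

variable {X E : Type*} [PseudoMetricSpace X]

theorem exists_mem_sphere_apply_mem {Y : Type*} [TopologicalSpace Y] (f : X ≃ₜ Y) {S : Set Y}
    (hS : IsPreconnected S) {x y z : X} {r : ℝ} (hy : f y ∈ S) (hz : f z ∈ S)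
    (hyr : dist y x ≤ r) (hrz : r ≤ dist z x) : ∃ a ∈ sphere x r, f a ∈ S := by
  have hcont : ContinuousOn (fun w => dist (f.symm w) x) S :=
    (f.symm.continuous.dist continuous_const).continuousOn
  obtain ⟨w, hw, hwr⟩ := hS.intermediate_value hy hz hcont (by simpa using ⟨hyr, hrz⟩)
  exact ⟨f.symm w, hwr, by simpa using hw⟩

variable [ProperSpace X] [NormedAddCommGroup E] [NormedSpace ℝ E]

theorem exists_le_dist_apply_eq_add_smul (f : X ≃ₜ E) (x : X) (r : ℝ) (p : E) {v : E}
    (hv : v ≠ 0) : ∃ z : X, r ≤ dist z x ∧ ∃ t : ℝ, 0 ≤ t ∧ f z = p + t • v := by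
  obtain ⟨R, hR⟩ := ((isCompact_closedBall x r).image f.continuous).isBounded.subset_closedBall p
  have hv' : 0 < ‖v‖ := norm_pos_iff.2 hv
  refine ⟨f.symm (p + ((|R| + 1) / ‖v‖) • v), ?_, (|R| + 1) / ‖v‖, by positivity, by simp⟩
  by_contra! hlt
  have hmem := hR ⟨_, hlt.le, f.apply_symm_apply _⟩
  rw [mem_closedBall, dist_eq_norm, add_sub_cancel_left, norm_smul,
    Real.norm_of_nonneg (by positivity), div_mul_cancel₀ _ hv'.ne'] at hmem
  linarith [le_abs_self R]

theorem exists_mem_sphere_apply_eq_add_smul (f : X ≃ₜ E) {x y : X} {r : ℝ} (hy : dist y x ≤ r)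
    {v : E} (hv : v ≠ 0) : ∃ a ∈ sphere x r, ∃ t : ℝ, 0 ≤ t ∧ f a = f y + t • v := by
  obtain ⟨z, hz, hray⟩ := exists_le_dist_apply_eq_add_smul f x r (f y) hv
  have hconn : IsPreconnected ((fun t : ℝ => f y + t • v) '' Ici 0) :=
    isPreconnected_Ici.image _ (by fun_prop)
  obtain ⟨a, ha, t, ht, hat⟩ := exists_mem_sphere_apply_mem f hconn ⟨0, self_mem_Ici, by simp⟩
    (hray.imp fun t ht => ⟨ht.1, ht.2.symm⟩) hy hz
  exact ⟨a, ha, t, ht, hat.symm⟩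

/- The segment from `f x` to `f p` gives `a`; the two rays on the line through `f x` and `f y`, one
beyond `f y` and one from `f x` away from `f y`, give `b` and `c`. -/
theorem exists_mem_sphere_dist_apply_le (f : X ≃ₜ E) {x p y : X} {r : ℝ}
    (hp : r ≤ dist p x) (hy : dist y x ≤ r) (hxy : f y ≠ f x) :
    ∃ a ∈ sphere x r, ∃ b ∈ sphere x r, ∃ c ∈ sphere x r,
      dist (f a) (f x) ≤ dist (f p) (f x) ∧ dist (f y) (f x) ≤ dist (f b) (f c) := by
  have hx : dist x x ≤ r := (dist_self x).trans_le (dist_nonneg.trans hy)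
  have hv : f y - f x ≠ 0 := sub_ne_zero.2 hxy
  obtain ⟨a, ha, haS⟩ := exists_mem_sphere_apply_mem f
    (convex_segment (𝕜 := ℝ) (f x) (f p)).isPreconnected
    (left_mem_segment ℝ (f x) (f p)) (right_mem_segment ℝ (f x) (f p)) hx hp
  obtain ⟨b, hb, t, ht, hbt⟩ := exists_mem_sphere_apply_eq_add_smul f hy hv
  obtain ⟨c, hc, s, hs, hcs⟩ := exists_mem_sphere_apply_eq_add_smul f hx (neg_ne_zero.2 hv)
  refine ⟨a, ha, b, hb, c, hc, ?_, ?_⟩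
  · exact (convex_closedBall (f x) (dist (f p) (f x))).segment_subset
      (mem_closedBall_self dist_nonneg) (mem_closedBall.2 le_rfl) haS
  · have hbc : f b - f c = (1 + t + s) • (f y - f x) := by
      rw [hbt, hcs]
      module
    rw [dist_eq_norm (f b), hbc, norm_smul, Real.norm_of_nonneg (by positivity), dist_eq_norm]
    exact le_mul_of_one_le_left (norm_nonneg _) (by linarith)

end SphereCrossing

section Truncation

variable {E : Type*} [NormedAddCommGroup E] [NormedSpace ℝ E] [FiniteDimensional ℝ E]

/-- A smooth cutoff equal to `1` on the ball of radius `2` and vanishing outside the ball of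
radius `3`. -/
noncomputable def truncBump (E : Type*) [NormedAddCommGroup E] : ContDiffBump (0 : E) :=
  ⟨2, 3, by norm_num, by norm_num⟩

/-- The cut-off embedding `u ↦ χ(u) • (u, 1)`, with `χ` the bump function `truncBump`. The second
coordinate keeps points near the origin apart from the points far away, which are sent to `0`. -/
noncomputable def unitTruncation (u : E) : E × ℝ := truncBump E u • (u, 1)

/-- The map `unitTruncation` recentred at `w` and rescaled by `M`. -/
noncomputable def truncation (w : E) (M : ℝ) (v : E) : E × ℝ := unitTruncation (M⁻¹ • (v - w))

theorem contDiff_unitTruncation : ContDiff ℝ 1 (unitTruncation (E := E)) :=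
  (truncBump E).contDiff.smul (contDiff_id.prodMk contDiff_const)

theorem contDiff_truncation (w : E) (M : ℝ) : ContDiff ℝ 1 (truncation w M) :=
  contDiff_unitTruncation.comp ((contDiff_id.sub contDiff_const).const_smul M⁻¹)

theorem truncBump_eq_zero {u : E} (hu : 3 ≤ ‖u‖) : truncBump E u = 0 :=
  (truncBump E).zero_of_le_dist (by rwa [dist_zero_right])

theorem hasCompactSupport_unitTruncation : HasCompactSupport (unitTruncation (E := E)) :=
  (truncBump E).hasCompactSupport.smul_right

theorem fderiv_unitTruncation_eq_zero {u : E} (hu : 3 < ‖u‖) :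
    fderiv ℝ unitTruncation u = 0 := by
  have hzero : unitTruncation (E := E) =ᶠ[𝓝 u] fun _ => 0 := by
    filter_upwards [(isOpen_lt continuous_const continuous_norm).mem_nhds hu] with v hv
    rw [unitTruncation, truncBump_eq_zero (le_of_lt hv), zero_smul]
  rw [hzero.fderiv_eq, fderiv_fun_const, Pi.zero_apply]

theorem fderiv_truncation (w : E) (M : ℝ) (v : E) :
    fderiv ℝ (truncation w M) v = M⁻¹ • fderiv ℝ unitTruncation (M⁻¹ • (v - w)) := by
  have hsub := fderiv_comp_sub (𝕜 := ℝ) (f := fun u => unitTruncation (M⁻¹ • u)) (x := v) w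
  rwa [fderiv_comp_smul] at hsub

theorem exists_norm_fderiv_truncation_le (E : Type*) [NormedAddCommGroup E] [NormedSpace ℝ E]
    [FiniteDimensional ℝ E] : ∃ C : ℝ, 0 ≤ C ∧ ∀ (w : E) (M : ℝ), 0 < M → ∀ v,
      ‖fderiv ℝ (truncation w M) v‖ ≤ (closedBall w (3 * M)).indicator (fun _ => C / M) v := by
  obtain ⟨C, hC⟩ := (hasCompactSupport_unitTruncation (E := E).fderiv
    (𝕜 := ℝ)).exists_bound_of_continuous (contDiff_unitTruncation.continuous_fderiv one_ne_zero)
  refine ⟨C, (norm_nonneg _).trans (hC 0), fun w M hM v => ?_⟩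
  have hnorm : ‖M⁻¹ • (v - w)‖ = dist v w / M := by
    rw [norm_smul, norm_inv, Real.norm_of_nonneg hM.le, inv_mul_eq_div, dist_eq_norm]
  rw [fderiv_truncation, norm_smul, norm_inv, Real.norm_of_nonneg hM.le, inv_mul_eq_div]
  by_cases hv : v ∈ closedBall w (3 * M)
  · rw [indicator_of_mem hv]
    gcongr
    exact hC _
  · rw [indicator_of_notMem hv, fderiv_unitTruncation_eq_zero, norm_zero, zero_div]
    rwa [hnorm, lt_div_iff₀ hM, ← not_le]

theorem norm_sub_le_of_norm_unitTruncation_sub_lt {a d : E} (ha : ‖a‖ ≤ 1)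
    (had : ‖unitTruncation a - unitTruncation d‖ < 1 / 32) :
    ‖a - d‖ < 1 / 8 := by
  have hχa : truncBump E a = 1 := (truncBump E).one_of_mem_closedBall <| by
    rw [mem_closedBall, dist_zero_right]
    exact ha.trans (by simp [truncBump])
  have hle : truncBump E d ≤ 1 := (truncBump E).le_one
  simp only [unitTruncation, hχa, one_smul, Prod.smul_mk, Prod.mk_sub_mk, Prod.norm_mk, max_lt_iff,
    smul_eq_mul, mul_one, Real.norm_eq_abs, abs_of_nonneg (sub_nonneg.2 hle)] at had
  obtain ⟨hfst, hsnd⟩ := had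
  have hd : ‖d‖ ≤ 3 := by
    by_contra! h
    rw [truncBump_eq_zero h.le] at hsnd
    norm_num at hsnd
  calc ‖a - d‖ = ‖(a - truncBump E d • d) - (1 - truncBump E d) • d‖ := by
        congr 1
        module
    _ ≤ ‖a - truncBump E d • d‖ + (1 - truncBump E d) * ‖d‖ := by
        refine (norm_sub_le _ _).trans_eq ?_
        rw [norm_smul, Real.norm_of_nonneg (sub_nonneg.2 hle)]
    _ < 1 / 8 := by nlinarith [norm_nonneg d]

theorem le_norm_truncation_sub {w a b c : E} {M : ℝ} (hM : 0 < M) (ha : dist a w ≤ M)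
    (hbc : M / 4 ≤ dist b c) : 1 / 32 ≤ ‖truncation w M a - truncation w M b‖ ∨
      1 / 32 ≤ ‖truncation w M a - truncation w M c‖ := by
  have hscale : ∀ u v : E, ‖M⁻¹ • (u - w) - M⁻¹ • (v - w)‖ = dist u v / M := fun u v => by
    rw [← smul_sub, sub_sub_sub_cancel_right, norm_smul, norm_inv, Real.norm_of_nonneg hM.le,
      inv_mul_eq_div, dist_eq_norm]
  have ha' : ‖M⁻¹ • (a - w)‖ ≤ 1 := by
    have hnorm := hscale a w
    rw [sub_self, smul_zero, sub_zero] at hnorm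
    exact hnorm.trans_le ((div_le_one hM).2 ha)
  by_contra! hlt
  have hb := norm_sub_le_of_norm_unitTruncation_sub_lt ha' hlt.1
  have hc := norm_sub_le_of_norm_unitTruncation_sub_lt ha' hlt.2
  rw [hscale, div_lt_iff₀ hM] at hb hc
  linarith [dist_triangle_left b c a]

end Truncation

section Quasisymmetry

open scoped Real

/-- The distortion inequality `η(δ) ≤ c` of an `η`-quasisymmetric map: points `δ` times closer to
`x` than `p` have images at least `c⁻¹` times closer to `f x` than `f p`. -/
def IsQuasisymmetricWith {X Y : Type*} [PseudoMetricSpace X] [PseudoMetricSpace Y] (f : X → Y)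
    (δ c : ℝ) : Prop :=
  ∀ x p y, dist y x ≤ δ * dist p x → dist (f y) (f x) ≤ c * dist (f p) (f x)

theorem exists_mem_sphere_le_norm_truncation_sub {X E : Type*} [PseudoMetricSpace X]
    [ProperSpace X] [NormedAddCommGroup E] [NormedSpace ℝ E] [FiniteDimensional ℝ E] (f : X ≃ₜ E)
    {x p y : X} {r : ℝ} (hxp : f p ≠ f x) (hp : r ≤ dist p x) (hy : dist y x ≤ r)
    (hlt : 1 / 4 * dist (f p) (f x) < dist (f y) (f x)) :
    ∃ a ∈ sphere x r, ∃ b ∈ sphere x r, 1 / 32 ≤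
      ‖truncation (f x) (dist (f p) (f x)) (f a) - truncation (f x) (dist (f p) (f x)) (f b)‖ := by
  have hM : 0 < dist (f p) (f x) := dist_pos.2 hxp
  have hxy : f y ≠ f x := dist_pos.1 (lt_trans (by positivity) hlt)
  obtain ⟨a, ha, b, hb, c, hc, hax, hbc⟩ := exists_mem_sphere_dist_apply_le f hp hy hxy
  rcases le_norm_truncation_sub hM hax (by linarith : _ ≤ dist (f b) (f c)) with hab | hac
  · exact ⟨a, ha, b, hb, hab⟩
  · exact ⟨a, ha, c, hc, hac⟩

theorem enorm_comp_sq_le_indicator {α E F G : Type*} [NormedAddCommGroup E] [NormedSpace ℝ E]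
    [NormedAddCommGroup F] [NormedSpace ℝ F] [NormedAddCommGroup G] [NormedSpace ℝ G]
    {L : F →L[ℝ] G} {S : Set α} {a : α} {c : ℝ} (hL : ‖L‖ ≤ S.indicator (fun _ => c) a)
    (A : E →L[ℝ] F) :
    ‖L.comp A‖ₑ ^ 2 ≤ S.indicator (fun _ => ENNReal.ofReal c ^ 2 * ‖A‖ₑ ^ 2) a := by
  have hcomp : ‖L.comp A‖ₑ ≤ ENNReal.ofReal (S.indicator (fun _ => c) a) * ‖A‖ₑ := by
    rw [← ofReal_norm, ← ofReal_norm, ← ENNReal.ofReal_mul' (norm_nonneg A)]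
    exact ENNReal.ofReal_le_ofReal ((L.opNorm_comp_le A).trans (by gcongr))
  calc ‖L.comp A‖ₑ ^ 2 ≤ (ENNReal.ofReal (S.indicator (fun _ => c) a) * ‖A‖ₑ) ^ 2 := by gcongr
    _ = S.indicator (fun _ => ENNReal.ofReal c ^ 2 * ‖A‖ₑ ^ 2) a := by
        by_cases ha : a ∈ S <;> simp [ha, mul_pow]

namespace IsAnalyticQC

variable {f : ℂ ≃ₜ ℂ} {f' : ℂ → ℂ →L[ℝ] ℂ} {K : ℝ}

theorem exists_lintegral_truncation_le (hf : IsAnalyticQC f f' K) :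
    ∃ N : ℝ, 0 ≤ N ∧ ∀ (w : ℂ) (M : ℝ), 0 < M →
      ∫⁻ z, ‖(fderiv ℝ (truncation w M) (f z)).comp (f' z)‖ₑ ^ 2 ≤ ENNReal.ofReal N := by
  obtain ⟨A, hA, hfderiv⟩ := exists_norm_fderiv_truncation_le ℂ
  obtain ⟨C, henergy⟩ := hf.exists_setLIntegral_enorm_sq_le
  refine ⟨A ^ 2 * C * (9 * π), by positivity, fun w M hM => ?_⟩
  have hmeas : MeasurableSet (f ⁻¹' closedBall w (3 * M)) :=
    (isClosed_closedBall.preimage f.continuous).measurableSet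
  calc ∫⁻ z, ‖(fderiv ℝ (truncation w M) (f z)).comp (f' z)‖ₑ ^ 2
      ≤ ENNReal.ofReal (A / M) ^ 2 * ∫⁻ z in f ⁻¹' closedBall w (3 * M), ‖f' z‖ₑ ^ 2 := by
        rw [← lintegral_const_mul' _ _ (by finiteness), ← lintegral_indicator hmeas]
        exact lintegral_mono fun z =>
          enorm_comp_sq_le_indicator (hfderiv w M hM (f z)) (f' z)
    _ ≤ ENNReal.ofReal (A / M) ^ 2 * (C * volume (closedBall w (3 * M))) := by
        gcongr
        exact henergy _ isClosed_closedBall.measurableSet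
    _ = ENNReal.ofReal (A ^ 2 * C * (9 * π)) := by
        rw [Complex.volume_closedBall, ← ENNReal.ofReal_coe_nnreal, ← ENNReal.ofReal_coe_nnreal,
          ← ENNReal.ofReal_pow (by positivity), ← ENNReal.ofReal_pow (by positivity),
          ← ENNReal.ofReal_mul (by positivity), ← ENNReal.ofReal_mul (by positivity),
          ← ENNReal.ofReal_mul (by positivity), NNReal.coe_real_pi]
        congr 1
        field_simp
        ring

theorem exists_isQuasisymmetricWith (hf : IsAnalyticQC f f' K) :
    ∃ δ : ℝ, 0 < δ ∧ δ < 1 ∧ IsQuasisymmetricWith f δ (1 / 4) := by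
  obtain ⟨N, hN, henergy⟩ := hf.exists_lintegral_truncation_le
  set κ : ℝ := 32 ^ 2 * (2 * π * N) + 1
  have hκ_pos : 0 < κ := by positivity
  have hδ : Real.exp (-κ) < 1 := Real.exp_lt_one_iff.2 (neg_lt_zero.2 hκ_pos)
  refine ⟨Real.exp (-κ), Real.exp_pos _, hδ, fun x p y hy => ?_⟩
  by_contra! hlt
  have hp : 0 < dist p x := dist_pos.2 fun hpx => by
    rw [hpx, dist_self, mul_zero, dist_le_zero] at hy
    simp [hpx, hy] at hlt
  have hfp : f p ≠ f x := f.injective.ne (dist_pos.1 hp)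
  have hlog := hf.isWeakFDeriv.ofReal_sq_mul_log_le_lintegral_comp f.continuous hf.memLp_restrict
    (contDiff_truncation (f x) (dist (f p) (f x))) (mul_pos (Real.exp_pos (-κ)) hp)
    (mul_le_of_le_one_left hp.le hδ.le) (by norm_num : (0 : ℝ) < 1 / 32) fun r hr =>
      exists_mem_sphere_le_norm_truncation_sub f hfp hr.2.le (hy.trans hr.1.le) hlt
  have hbound : ENNReal.ofReal ((1 / 32) ^ 2 * κ) ≤ ENNReal.ofReal (2 * π * N) := by
    rw [div_mul_cancel_right₀ hp.ne', ← Real.exp_neg, neg_neg, Real.log_exp] at hlog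
    rw [ENNReal.ofReal_mul (p := 2 * π) (by positivity)]
    refine hlog.trans ?_
    gcongr
    exact (setLIntegral_le_lintegral _ _).trans (henergy _ _ (dist_pos.2 hfp))
  rw [ENNReal.ofReal_le_ofReal_iff (by positivity)] at hbound
  linarith

end IsAnalyticQC

end Quasisymmetry

section QuasihyperbolicLength

/-- The quasihyperbolic length in `D` of a curve `γ` parametrized by the unit interval. -/
noncomputable def qhLength (D : Set ℂ) (γ : ℝ → ℂ) : ℝ :=
  ∫ t in (0 : ℝ)..1, ‖deriv γ t‖ / infDist (γ t) (frontier D)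

/-- `z` and `w` can be joined by a Lipschitz curve in `D` of quasihyperbolic length at most `L`. -/
def QHJoined (D : Set ℂ) (L : ℝ) (z w : ℂ) : Prop :=
  ∃ γ : ℝ → ℂ, (∃ K : ℝ≥0, LipschitzOnWith K γ (Icc 0 1)) ∧ (∀ t ∈ Icc (0 : ℝ) 1, γ t ∈ D) ∧
    γ 0 = z ∧ γ 1 = w ∧ qhLength D γ ≤ L

/-- The curve running through `γ₁` and then through `γ₂` at double speed; written as a sum, it is
Lipschitz because both summands are. -/
noncomputable def curveConcat {E : Type*} [AddGroup E] (γ₁ γ₂ : ℝ → E) (t : ℝ) : E :=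
  γ₁ (min (2 * t) 1) + (γ₂ (max (2 * t - 1) 0) - γ₁ 1)

section Concatenation

variable {E : Type*} {γ₁ γ₂ : ℝ → E}

theorem curveConcat_of_le_half [AddGroup E] (h : γ₂ 0 = γ₁ 1) {t : ℝ} (ht : t ≤ 1 / 2) :
    curveConcat γ₁ γ₂ t = γ₁ (2 * t) := by
  rw [curveConcat, min_eq_left (by linarith), max_eq_right (by linarith), h, sub_self, add_zero]

theorem curveConcat_of_half_le [AddCommGroup E] {t : ℝ} (ht : 1 / 2 ≤ t) :
    curveConcat γ₁ γ₂ t = γ₂ (2 * t - 1) := by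
  rw [curveConcat, min_eq_right (by linarith), max_eq_left (by linarith), add_sub_cancel]

variable [NormedAddCommGroup E]

theorem exists_lipschitzOnWith_curveConcat {K₁ K₂ : ℝ≥0} (h₁ : LipschitzOnWith K₁ γ₁ (Icc 0 1))
    (h₂ : LipschitzOnWith K₂ γ₂ (Icc 0 1)) :
    ∃ K : ℝ≥0, LipschitzOnWith K (curveConcat γ₁ γ₂) (Icc 0 1) := by
  have hdouble : LipschitzWith 2 fun t : ℝ => 2 * t := by
    simpa using lipschitzWith_smul (2 : ℝ) (β := ℝ)
  have hmin : MapsTo (fun t : ℝ => min (2 * t) 1) (Icc 0 1) (Icc 0 1) := fun t ht =>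
    ⟨le_min (by linarith [ht.1]) zero_le_one, min_le_right _ _⟩
  have hmax : MapsTo (fun t : ℝ => max (2 * t - 1) 0) (Icc 0 1) (Icc 0 1) := fun t ht =>
    ⟨le_max_right _ _, max_le (by linarith [ht.2]) zero_le_one⟩
  exact ⟨_, (h₁.comp (hdouble.min_const 1).lipschitzOnWith hmin).add
    ((h₂.comp ((hdouble.sub (LipschitzWith.const 1)).max_const 0).lipschitzOnWith hmax).sub
      (LipschitzWith.const (γ₁ 1)).lipschitzOnWith)⟩

theorem integral_norm_deriv_div_of_eqOn_comp_mul_add [NormedSpace ℝ E] {γ η : ℝ → E}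
    {a b c d : ℝ} (hab : a ≤ b) (hc : 0 ≤ c) (h : EqOn γ (fun t => η (c * t + d)) (Ioo a b))
    (ρ : E → ℝ) : ∫ t in a..b, ‖deriv γ t‖ / ρ (γ t) =
      ∫ t in c * a + d..c * b + d, ‖deriv η t‖ / ρ (η t) := by
  rw [← intervalIntegral.smul_integral_comp_mul_add, ← intervalIntegral.integral_smul]
  refine intervalIntegral.integral_congr_Ioo_of_le hab fun t ht => ?_
  have hderiv : deriv γ t = c • deriv η (c * t + d) := by
    rw [(h.eventuallyEq_of_mem (Ioo_mem_nhds ht.1 ht.2)).deriv_eq,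
      deriv_comp_mul_left c (fun s => η (s + d)), deriv_comp_add_const]
  simp only [hderiv, h ht, norm_smul, Real.norm_of_nonneg hc, smul_eq_mul, mul_div_assoc]

end Concatenation

theorem qhLength_nonneg (D : Set ℂ) (γ : ℝ → ℂ) : 0 ≤ qhLength D γ :=
  intervalIntegral.integral_nonneg zero_le_one
    fun _ _ => div_nonneg (norm_nonneg _) infDist_nonneg

theorem qhLength_curveConcat_le (D : Set ℂ) {γ₁ γ₂ : ℝ → ℂ} (h : γ₂ 0 = γ₁ 1) :
    qhLength D (curveConcat γ₁ γ₂) ≤ qhLength D γ₁ + qhLength D γ₂ := by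
  have hfst : ∫ t in (0 : ℝ)..1 / 2, ‖deriv (curveConcat γ₁ γ₂) t‖ /
      infDist (curveConcat γ₁ γ₂ t) (frontier D) = qhLength D γ₁ := by
    rw [integral_norm_deriv_div_of_eqOn_comp_mul_add (η := γ₁) (c := 2) (d := 0) (by norm_num)
      zero_le_two (fun t ht => by simpa using curveConcat_of_le_half h ht.2.le)
      (fun v => infDist v (frontier D)), qhLength]
    norm_num
  have hsnd : ∫ t in (1 / 2 : ℝ)..1, ‖deriv (curveConcat γ₁ γ₂) t‖ /
      infDist (curveConcat γ₁ γ₂ t) (frontier D) = qhLength D γ₂ := by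
    rw [integral_norm_deriv_div_of_eqOn_comp_mul_add (η := γ₂) (c := 2) (d := -1) (by norm_num)
      zero_le_two (fun t ht => curveConcat_of_half_le ht.1.le)
      (fun v => infDist v (frontier D)), qhLength]
    norm_num
  by_cases hint : IntervalIntegrable (fun t => ‖deriv (curveConcat γ₁ γ₂) t‖ /
      infDist (curveConcat γ₁ γ₂ t) (frontier D)) volume 0 1
  · rw [qhLength, ← intervalIntegral.integral_add_adjacent_intervals (b := 1 / 2)
      (hint.mono_set (uIcc_subset_uIcc_left (by norm_num [mem_uIcc])))
      (hint.mono_set (uIcc_subset_uIcc_right (by norm_num [mem_uIcc]))), hfst, hsnd]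
  · rw [qhLength, intervalIntegral.integral_undef hint]
    exact add_nonneg (qhLength_nonneg D γ₁) (qhLength_nonneg D γ₂)

namespace QHJoined

variable {D : Set ℂ} {L L₁ L₂ : ℝ} {z w u : ℂ}

theorem qhDist_le (h : QHJoined D L z w) : qhDist D z w ≤ L := by
  obtain ⟨γ, hlip, hD, h₀, h₁, hL⟩ := h
  refine le_trans (csInf_le ⟨0, ?_⟩ ⟨γ, hlip, hD, h₀, h₁, rfl⟩) hL
  rintro _ ⟨η, -, -, -, -, rfl⟩
  exact qhLength_nonneg D η

theorem mono (h : QHJoined D L₁ z w) (hL : L₁ ≤ L₂) : QHJoined D L₂ z w :=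
  let ⟨γ, hlip, hD, h₀, h₁, hγ⟩ := h
  ⟨γ, hlip, hD, h₀, h₁, hγ.trans hL⟩

theorem trans (h₁ : QHJoined D L₁ z w) (h₂ : QHJoined D L₂ w u) : QHJoined D (L₁ + L₂) z u := by
  obtain ⟨γ₁, ⟨K₁, hK₁⟩, hD₁, rfl, rfl, hL₁⟩ := h₁
  obtain ⟨γ₂, ⟨K₂, hK₂⟩, hD₂, hw, rfl, hL₂⟩ := h₂
  refine ⟨curveConcat γ₁ γ₂, exists_lipschitzOnWith_curveConcat hK₁ hK₂, fun t ht => ?_, ?_, ?_,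
    (qhLength_curveConcat_le D hw).trans (add_le_add hL₁ hL₂)⟩
  · rcases le_total t (1 / 2) with h | h
    · rw [curveConcat_of_le_half hw h]
      exact hD₁ _ ⟨by linarith [ht.1], by linarith⟩
    · rw [curveConcat_of_half_le h]
      exact hD₂ _ ⟨by linarith, by linarith [ht.2]⟩
  · rw [curveConcat_of_le_half hw (by norm_num), mul_zero]
  · rw [curveConcat_of_half_le (by norm_num)]
    norm_num

theorem of_segment {m : ℝ} (hm : 0 < m) (hD : segment ℝ z w ⊆ D)
    (hdist : ∀ v ∈ segment ℝ z w, m ≤ infDist v (frontier D)) :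
    QHJoined D (dist z w / m) z w := by
  have hmem : ∀ t ∈ Icc (0 : ℝ) 1, AffineMap.lineMap z w t ∈ segment ℝ z w := fun t ht => by
    rw [segment_eq_image_lineMap]
    exact mem_image_of_mem _ ht
  refine ⟨AffineMap.lineMap z w, ⟨_, (lipschitzWith_lineMap z w).lipschitzOnWith⟩,
    fun t ht => hD (hmem t ht), AffineMap.lineMap_apply_zero z w,
    AffineMap.lineMap_apply_one z w, ?_⟩
  have hbound : ∀ t ∈ uIoc (0 : ℝ) 1, ‖‖deriv (AffineMap.lineMap z w : ℝ → ℂ) t‖ /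
      infDist (AffineMap.lineMap z w t) (frontier D)‖ ≤ dist z w / m := fun t ht => by
    rw [uIoc_of_le zero_le_one] at ht
    rw [AffineMap.hasDerivAt_lineMap.deriv, norm_div, norm_norm, Real.norm_of_nonneg infDist_nonneg,
      ← dist_eq_norm, dist_comm w]
    gcongr
    exact hdist _ (hmem t ⟨ht.1.le, ht.2⟩)
  simpa [qhLength] using (Real.le_norm_self _).trans
    (intervalIntegral.norm_integral_le_of_norm_le_const hbound)

theorem refl (hz : z ∈ D) : QHJoined D 0 z z :=
  ⟨fun _ => z, ⟨0, (LipschitzWith.const z).lipschitzOnWith⟩, fun _ _ => hz, rfl, rfl,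
    by simp [qhLength]⟩

end QHJoined

end QuasihyperbolicLength

section QuasisymmetricImage

theorem subset_of_isPreconnected_of_disjoint_frontier {X : Type*} [TopologicalSpace X]
    {S U : Set X} (hS : IsPreconnected S) (hU : IsOpen U) (hSU : (S ∩ U).Nonempty)
    (hdisj : Disjoint S (frontier U)) : S ⊆ U := by
  refine hS.subset_left_of_subset_union hU isClosed_closure.isOpen_compl
    (disjoint_compl_right_iff_subset.2 subset_closure) (fun x hx => ?_) hSU
  by_contra! h
  simp only [mem_union, mem_compl_iff, not_or, not_not] at h
  exact hdisj.notMem_of_mem_left hx (hU.frontier_eq ▸ ⟨h.2, h.1⟩)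

theorem infDist_frontier_pos {X : Type*} [PseudoMetricSpace X] {U : Set X} (hU : IsOpen U)
    (hne : (frontier U).Nonempty) {x : X} (hx : x ∈ U) : 0 < infDist x (frontier U) :=
  (isClosed_frontier.notMem_iff_infDist_pos hne).1 fun h => (hU.frontier_eq ▸ h).2 hx

theorem exists_norm_eq_dist_eq {E : Type*} [NormedAddCommGroup E] [NormedSpace ℝ E] [Nontrivial E]
    (x : E) {s : ℝ} (hs : 0 ≤ s) : ∃ y : E, ‖y‖ = s ∧ dist y x = |s - ‖x‖| := by
  rcases eq_or_ne x 0 with rfl | hx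
  · obtain ⟨y, hy⟩ := exists_norm_eq E hs
    exact ⟨y, hy, by simp [hy, abs_of_nonneg hs]⟩
  · have hx' : ‖x‖ ≠ 0 := norm_ne_zero_iff.2 hx
    refine ⟨(s / ‖x‖) • x, ?_, ?_⟩
    · rw [norm_smul, norm_div, norm_norm, Real.norm_of_nonneg hs, div_mul_cancel₀ _ hx']
    · have hsub : (s / ‖x‖) • x - x = ((s - ‖x‖) / ‖x‖) • x := by
        rw [sub_div, div_self hx', sub_smul, one_smul]
      rw [dist_eq_norm, hsub, norm_smul, norm_div, norm_norm, div_mul_cancel₀ _ hx',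
        Real.norm_eq_abs]

theorem nonempty_frontier_unitBall {E : Type*} [NormedAddCommGroup E] [NormedSpace ℝ E]
    [Nontrivial E] : (frontier (ball (0 : E) 1)).Nonempty := by
  rw [frontier_ball _ one_ne_zero]
  exact NormedSpace.sphere_nonempty.2 zero_le_one

theorem infDist_frontier_image_ball_pos (f : ℂ ≃ₜ ℂ) {x : ℂ} (hx : x ∈ ball (0 : ℂ) 1) :
    0 < infDist (f x) (frontier (f '' ball 0 1)) :=
  infDist_frontier_pos (f.isOpenMap _ isOpen_ball)
    (f.image_frontier (ball 0 1) ▸ nonempty_frontier_unitBall.image f) (mem_image_of_mem f hx)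

theorem one_sub_norm_le_infDist_frontier_ball {E : Type*} [NormedAddCommGroup E] [NormedSpace ℝ E]
    [Nontrivial E] (x : E) : 1 - ‖x‖ ≤ infDist x (frontier (ball (0 : E) 1)) := by
  refine (le_infDist nonempty_frontier_unitBall).2 fun p hp => ?_
  rw [frontier_ball _ one_ne_zero] at hp
  rw [dist_comm, dist_eq_norm, ← mem_sphere_zero_iff_norm.1 hp]
  exact norm_sub_norm_le p x

theorem IsQuasisymmetricWith.dist_le_mul_pow {E Y : Type*} [NormedAddCommGroup E]
    [NormedSpace ℝ E] [Nontrivial E] [PseudoMetricSpace Y] {f : E → Y} {δ c : ℝ}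
    (hf : IsQuasisymmetricWith f δ c) (hδ : 0 ≤ δ) (hc : 0 ≤ c) {p : E} {B : ℝ}
    (hB : ∀ y, dist y p ≤ 1 → dist (f y) (f p) ≤ B) (n : ℕ) :
    ∀ y, dist y p ≤ δ ^ n → dist (f y) (f p) ≤ B * c ^ n := by
  induction n with
  | zero => simpa using hB
  | succ n ih =>
    intro y hy
    obtain ⟨v, hv⟩ := exists_norm_eq E (pow_nonneg hδ n)
    have hq : dist (p + v) p = δ ^ n := by rw [dist_self_add_left, hv]
    calc dist (f y) (f p) ≤ c * dist (f (p + v)) (f p) :=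
          hf p (p + v) y (by rwa [hq, ← pow_succ'])
      _ ≤ c * (B * c ^ n) := by
          gcongr
          exact ih _ hq.le
      _ = B * c ^ (n + 1) := by ring

namespace IsQuasisymmetricWith

variable {f : ℂ ≃ₜ ℂ} {δ : ℝ}

theorem qhJoined_image (hf : IsQuasisymmetricWith f δ (1 / 4)) (hδ : 0 ≤ δ) {U : Set ℂ}
    (hU : IsOpen U) (hne : (frontier U).Nonempty) {x y : ℂ} (hx : x ∈ U)
    (hy : dist y x ≤ δ * infDist x (frontier U)) : QHJoined (f '' U) 1 (f x) (f y) := by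
  have hfU : IsOpen (f '' U) := f.isOpenMap U hU
  have hfne : (frontier (f '' U)).Nonempty := f.image_frontier U ▸ hne.image f
  have hfx : f x ∈ f '' U := mem_image_of_mem f hx
  set m := infDist (f x) (frontier (f '' U))
  have hm_pos : 0 < m := infDist_frontier_pos hfU hfne hfx
  have hfy : dist (f y) (f x) ≤ m / 4 := by
    obtain ⟨q, hq, hmq⟩ := isClosed_frontier.exists_infDist_eq_dist hfne (f x)
    obtain ⟨p, hp, rfl⟩ : q ∈ f '' frontier U := f.image_frontier U ▸ hq
    have hpx : infDist x (frontier U) ≤ dist p x := dist_comm x p ▸ infDist_le_dist_of_mem hp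
    have hquarter := hf x p y (hy.trans (mul_le_mul_of_nonneg_left hpx hδ))
    rw [dist_comm (f p), ← hmq] at hquarter
    linarith
  have hseg : ∀ v ∈ segment ℝ (f x) (f y), 3 / 4 * m ≤ infDist v (frontier (f '' U)) :=
    fun v hv => by
      have hv' : dist v (f x) ≤ m / 4 := (convex_closedBall (f x) (m / 4)).segment_subset
        (mem_closedBall_self (by positivity)) hfy hv
      linarith [infDist_le_infDist_add_dist (s := frontier (f '' U)) (x := f x) (y := v),
        dist_comm v (f x)]
  have hsubset : segment ℝ (f x) (f y) ⊆ f '' U :=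
    subset_of_isPreconnected_of_disjoint_frontier (convex_segment _ _).isPreconnected hfU
      ⟨f x, left_mem_segment ℝ _ _, hfx⟩ <| disjoint_left.2 fun v hv hvU => by
        linarith [hseg v hv, infDist_zero_of_mem hvU]
  refine (QHJoined.of_segment (by positivity) hsubset hseg).mono ?_
  rw [div_le_one (by positivity), dist_comm]
  linarith

theorem qhJoined_image_ball (hf : IsQuasisymmetricWith f δ (1 / 4)) (hδ : 0 ≤ δ) (n : ℕ) :
    ∀ x ∈ ball (0 : ℂ) 1, 1 ≤ (1 + δ) ^ n * (1 - ‖x‖) →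
      QHJoined (f '' ball 0 1) n (f x) (f 0) := by
  induction n with
  | zero =>
    intro x hx hle
    obtain rfl : x = 0 := norm_le_zero_iff.1 (by simpa using hle)
    simpa using QHJoined.refl (mem_image_of_mem f hx)
  | succ n ih =>
    intro x hx hle
    have hx' : ‖x‖ < 1 := mem_ball_zero_iff.1 hx
    obtain ⟨y, hy, hyx⟩ := exists_norm_eq_dist_eq x (le_max_right (‖x‖ - δ * (1 - ‖x‖)) 0)
    have hstep : 0 ≤ δ * (1 - ‖x‖) := mul_nonneg hδ (by linarith)
    have hyx_le : dist y x ≤ δ * (1 - ‖x‖) := by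
      rw [hyx, abs_sub_le_iff]
      constructor
      · rw [sub_le_iff_le_add]
        exact max_le (by linarith) (by positivity)
      · linarith [le_max_left (‖x‖ - δ * (1 - ‖x‖)) 0]
    have hy_ball : y ∈ ball (0 : ℂ) 1 := by
      rw [mem_ball_zero_iff, hy]
      exact max_lt (by linarith) one_pos
    have hy_le : 1 ≤ (1 + δ) ^ n * (1 - ‖y‖) := by
      rcases max_choice (‖x‖ - δ * (1 - ‖x‖)) 0 with h | h <;> rw [hy, h]
      · exact hle.trans_eq (by ring)
      · simpa using one_le_pow₀ (by linarith : 1 ≤ 1 + δ)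
    rw [Nat.cast_succ, add_comm]
    exact (hf.qhJoined_image hδ isOpen_ball nonempty_frontier_unitBall hx <| hyx_le.trans <|
      mul_le_mul_of_nonneg_left (one_sub_norm_le_infDist_frontier_ball x) hδ).trans
        (ih y hy_ball hy_le)

theorem qhDist_image_ball_le (hf : IsQuasisymmetricWith f δ (1 / 4)) (hδ : 0 < δ) {x : ℂ}
    (hx : x ∈ ball (0 : ℂ) 1) : qhDist (f '' ball 0 1) (f x) (f 0) ≤
      -Real.log (1 - ‖x‖) / Real.log (1 + δ) + 1 := by
  have hx' : 0 < 1 - ‖x‖ := sub_pos.2 (mem_ball_zero_iff.1 hx)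
  obtain ⟨n, hn, hn'⟩ := exists_nat_pow_near
    ((one_le_inv₀ hx').2 (sub_le_self 1 (norm_nonneg x))) (lt_add_of_pos_right 1 hδ)
  have hjoin := hf.qhJoined_image_ball hδ.le (n + 1) x hx ((inv_le_iff_one_le_mul₀ hx').1 hn'.le)
  refine hjoin.qhDist_le.trans ?_
  rw [Nat.cast_succ, add_le_add_iff_right,
    le_div_iff₀ (Real.log_pos (lt_add_of_pos_right 1 hδ)), ← Real.log_pow, ← Real.log_inv]
  exact Real.log_le_log (by positivity) hn

theorem exists_infDist_frontier_image_ball_le (hf : IsQuasisymmetricWith f δ (1 / 4))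
    (hδ : 0 ≤ δ) : ∃ B : ℝ, 0 < B ∧ ∀ (n : ℕ) (x : ℂ), x ∈ ball (0 : ℂ) 1 → 1 - ‖x‖ ≤ δ ^ n →
      infDist (f x) (frontier (f '' ball 0 1)) ≤ B * (1 / 4) ^ n := by
  have hbdd := ((isCompact_closedBall (0 : ℂ) 2).image f.continuous).isBounded
  refine ⟨diam (f '' closedBall 0 2) + 1, by positivity, fun n x hx hxn => ?_⟩
  obtain ⟨p, hp, hpx⟩ := exists_norm_eq_dist_eq x zero_le_one
  rw [abs_of_pos (sub_pos.2 (mem_ball_zero_iff.1 hx))] at hpx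
  have hp_mem : f p ∈ frontier (f '' ball 0 1) := by
    rw [← f.image_frontier, frontier_ball _ one_ne_zero]
    exact mem_image_of_mem f (mem_sphere_zero_iff_norm.2 hp)
  have hB : ∀ y, dist y p ≤ 1 → dist (f y) (f p) ≤ diam (f '' closedBall 0 2) + 1 := fun y hy => by
    have hy' : ‖y‖ ≤ 2 := by
      linarith [dist_triangle y p 0, dist_zero_right y, dist_zero_right p]
    have hle := dist_le_diam_of_mem hbdd
      (mem_image_of_mem f (mem_closedBall_zero_iff.2 hy'))
      (mem_image_of_mem f (mem_closedBall_zero_iff.2 (by linarith : ‖p‖ ≤ 2)))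
    linarith
  exact (infDist_le_dist_of_mem hp_mem).trans
    (hf.dist_le_mul_pow hδ (by norm_num) hB n x (by rwa [dist_comm, hpx]))

theorem exists_neg_log_one_sub_norm_le (hf : IsQuasisymmetricWith f δ (1 / 4)) (hδ : 0 < δ)
    (hδ₁ : δ < 1) : ∃ B : ℝ, ∀ x ∈ ball (0 : ℂ) 1, -Real.log (1 - ‖x‖) ≤
      -Real.log δ / Real.log 4 * (B - Real.log (infDist (f x) (frontier (f '' ball 0 1)))) := by
  obtain ⟨B, hB, hle⟩ := hf.exists_infDist_frontier_image_ball_le hδ.le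
  refine ⟨Real.log B + Real.log 4, fun x hx => ?_⟩
  have hx' : 0 < 1 - ‖x‖ := sub_pos.2 (mem_ball_zero_iff.1 hx)
  obtain ⟨n, hn, hn'⟩ := exists_nat_pow_near_of_lt_one hx' (sub_le_self 1 (norm_nonneg x)) hδ hδ₁
  have hlog : -Real.log (1 - ‖x‖) ≤ (n + 1) * -Real.log δ := by
    have := Real.log_le_log (by positivity) hn.le
    rw [Real.log_pow, Nat.cast_succ] at this
    linarith
  have hdist : n * Real.log 4 ≤
      Real.log B - Real.log (infDist (f x) (frontier (f '' ball 0 1))) := by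
    have := Real.log_le_log (infDist_frontier_image_ball_pos f hx) (hle n x hx hn')
    rw [Real.log_mul hB.ne' (by positivity), Real.log_pow, one_div, Real.log_inv] at this
    linarith
  have hlogδ : 0 ≤ -Real.log δ := neg_nonneg.2 (Real.log_nonpos hδ.le hδ₁.le)
  calc -Real.log (1 - ‖x‖) ≤ (n + 1) * -Real.log δ := hlog
    _ = -Real.log δ / Real.log 4 * (n * Real.log 4 + Real.log 4) := by field_simp
    _ ≤ -Real.log δ / Real.log 4 * (Real.log B + Real.log 4 -
          Real.log (infDist (f x) (frontier (f '' ball 0 1)))) := by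
        gcongr
        linarith

theorem qhbc_image_ball (hf : IsQuasisymmetricWith f δ (1 / 4)) (hδ : 0 < δ) (hδ₁ : δ < 1) :
    QHBC (f '' ball 0 1) := by
  obtain ⟨B, hB⟩ := hf.exists_neg_log_one_sub_norm_le hδ hδ₁
  have h0 : (0 : ℂ) ∈ ball 0 1 := mem_ball_self one_pos
  set a := -Real.log δ / Real.log 4 / Real.log (1 + δ) with ha
  set m₀ := infDist (f 0) (frontier (f '' ball 0 1))
  refine ⟨a, a * (B - Real.log m₀) + 1, f 0, mem_image_of_mem f h0, ?_⟩
  rintro _ ⟨x, hx, rfl⟩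
  set m := infDist (f x) (frontier (f '' ball 0 1))
  have hlog : 0 < Real.log (1 + δ) := Real.log_pos (by linarith)
  calc qhDist (f '' ball 0 1) (f x) (f 0)
      ≤ -Real.log (1 - ‖x‖) / Real.log (1 + δ) + 1 := hf.qhDist_image_ball_le hδ hx
    _ ≤ -Real.log δ / Real.log 4 * (B - Real.log m) / Real.log (1 + δ) + 1 := by
        gcongr
        exact hB x hx
    _ = a * Real.log (m₀ / m) + (a * (B - Real.log m₀) + 1) := by
        rw [Real.log_div (infDist_frontier_image_ball_pos f h0).ne'
          (infDist_frontier_image_ball_pos f hx).ne', ha]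
        ring

end IsQuasisymmetricWith

end QuasisymmetricImage

/-- every quasidisk satisfies the quasihyperbolic boundary condition. -/
theorem quasidisk_qhbc (f : ℂ → ℂ) (hf : IsQCOfPlane f) :
    QHBC (f '' Metric.ball 0 1) := by
  obtain ⟨F, F', K, rfl, hF⟩ := hf.exists_isAnalyticQC
  obtain ⟨δ, hδ, hδ₁, hqs⟩ := hF.exists_isQuasisymmetricWith
  exact hqs.qhbc_image_ball hδ hδ₁
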